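/- Let u, v_1, v_2, v_3 be formal Laurent series in q with integer coefficients, let l, γ_1, γ_2, γ_3 be integers, and suppose that for each k with l ≤ k ≤ l+6 there exist Laurent polynomials p_k^{(1)}, p_k^{(2)}, p_k^{(3)} ∈ ℤ[x, x^{−1}] of the form p_k^{(i)}(x) = ∑_n c_i(k,n)·7^{⌊(7n − k + γ_i)/4⌋}·x^n with integers c_i(k,n) (only finitely many nonzero), such that U_7(u·t^k) = v_1·p_k^{(1)}(t) + v_2·p_k^{(2)}(t) + v_3·p_k^{(3)}(t). Then for every integer k there exist Laurent polynomials p_k^{(1)}, p_k^{(2)}, p_k^{(3)} ∈ ℤ[x, x^{−1}] of the same form for which U_7(u·t^k) = v_1·p_k^{(1)}(t) + v_2·p_k^{(2)}(t) + v_3·p_k^{(3)}(t) holds. -/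

import Mathlib

noncomputable section

/-- `J b = ∏_{k=1}^∞ (1 - q^{b·k})` as a formal power series with integer coefficients. -/
def J (b : ℕ) : PowerSeries ℤ :=
  PowerSeries.mk fun n =>
    PowerSeries.coeff n
      (∏ k ∈ Finset.range (n + 1), (1 - (PowerSeries.X : PowerSeries ℤ) ^ (b * (k + 1))))

/-- Evaluation of a Laurent polynomial (given by its finitely supported coefficient
function `p : ℤ →₀ ℤ`) at the invertible Laurent series `T`. -/
def evalT (T : (LaurentSeries ℤ)ˣ) (p : ℤ →₀ ℤ) : LaurentSeries ℤ :=
  p.sum fun n c => c • ((T ^ n : (LaurentSeries ℤ)ˣ) : LaurentSeries ℤ)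

/-- `p` has the shape `∑_n c(n)·7^{⌊(7n−k+γ)/4⌋}·x^n` with integer `c(n)`
(the equation is read in ℚ, so that negative exponents of 7 are meaningful). -/
def HasForm (p : ℤ →₀ ℤ) (k γ : ℤ) : Prop :=
  ∀ n : ℤ, ∃ c : ℤ, (p n : ℚ) = (c : ℚ) * (7 : ℚ) ^ (⌊((7 * n - k + γ : ℤ) : ℚ) / 4⌋)


lemma aux_G {R : Type*} [CommRing R] (a b c : R) (h0 : a*b*c + 1 = 0)
    (h1 : a*b^2 - a^2 + c = 0) (h2 : b*c^2 - b^2 + a = 0) (h3 : c*a^2 - c^2 + b = 0)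
    (x Y : R) (hx : x = a+b+c-1) (hY : Y = a^3*b+b^3*c+c^3*a+8) :
    x^7+7*x^6+21*x^5+49*x^4+147*x^3+343*x^2+343*x - Y*(7*x^3+35*x^2+49*x) - Y^2 = 0 := by
  subst hx hY
  linear_combination (-2*a^2*b^3 - 2*a^3*c^2 - 2*b^2*c^3 + 21*a^4 + 63*a^3*b + 112*a^2*b^2 +
      84*a*b^3 + 21*b^4 + 84*a^3*c + 189*a^2*b*c + 189*a*b^2*c + 63*b^3*c + 112*a^2*c^2 +
      189*a*b*c^2 + 112*b^2*c^2 + 63*a*c^3 + 84*b*c^3 + 21*c^4 - 28*a^3 - 28*a^2*b - 14*a*b^2 -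
      28*b^3 - 14*a^2*c - 28*b^2*c - 28*a*c^2 - 14*b*c^2 - 28*c^3 - 35*a^2 - 28*a*b - 35*b^2 -
      28*a*c - 28*b*c - 35*c^2 - 35*a - 35*b - 35*c - 9) * h0 + (-a^5 + 14*a^3*b + 28*a^2*b^2 +
      21*a*b^3 + 7*b^4 + 7*a^2*b + 7*a*b^2 + b^3 + 7*a^2 + 3*a*b - 28*a - 28*b + 7) * h1 + (-b^5
      + 14*b^3*c + 28*b^2*c^2 + 21*b*c^3 + 7*c^4 + 7*b^2*c + 7*b*c^2 + c^3 + 7*b^2 + 3*b*c -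
      28*b - 28*c + 7) * h2 + (-c^5 + 7*a^4 + 21*a^3*c + 28*a^2*c^2 + 14*a*c^3 + a^3 + 7*a^2*c +
      7*a*c^2 + 3*a*c + 7*c^2 - 28*a - 28*c + 7) * h3

lemma aux_N {R : Type*} [CommRing R] (A B C e : R) (h0 : A*B*C + e^3 = 0)
    (h1 : A*B^2 - A^2*e + C*e^2 = 0) (h2 : B*C^2 - B^2*e + A*e^2 = 0) (h3 : C*A^2 - C^2*e + B*e^2 = 0)
    (p q : R) (hp : p = A^3 - A*B^2 + B^3 - A^2*C + 3*A*B*C - B*C^2 + C^3 + A*B*e + A*C*e + B*C*e - A*e^2 - B*e^2 - C*e^2 - e^3) (hq : q = A^2*B - A*B^2 - A^2*C + A*B*C + B^2*C + A*C^2 - B*C^2 - A^2*e - B^2*e - C^2*e - A*e^2 - B*e^2 - C*e^2) :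
    (A+B+C-e)*(p^2-p*q+2*q^2)*e = (A^3*B+B^3*C+C^3*A+8*e^4)^2 := by
  subst hp hq
  linear_combination (-2*A^2*B^3 - 2*A^3*C^2 - 2*B^2*C^3 + 7*A^3*B*e + 7*B^3*C*e + 7*A*C^3*e +
      7*A*B*C*e^2 - 65*e^5) * h0 + (-A^5 + 8*B^3*e^2 + 24*A*B*e^3) * h1 + (-B^5 + 8*C^3*e^2 +
      24*B*C*e^3) * h2 + (-C^5 + 8*A^3*e^2 + 24*A*C*e^3) * h3

lemma aux_F {R : Type*} [CommRing R] [IsDomain R] (x t s : R) (hs : s*(t*x^4) = 1)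
    (hG : x^7+7*x^6+21*x^5+49*x^4+147*x^3+343*x^2+343*x - (-(t*x^4))*(7*x^3+35*x^2+49*x) - (-(t*x^4))^2 = 0) :
  -13841287201*t^6*s^7 - 7909306972*t^6*s^6 - 1856265922*t^6*s^5 - 282475249*t^5*s^6 -
      224003696*t^6*s^4 - 161414428*t^5*s^5 - 14201915*t^6*s^3 - 37882978*t^5*s^4 -
      5764801*t^4*s^5 - 422576*t^6*s^2 - 4571504*t^5*s^3 - 3294172*t^4*s^4 + t^7 - 4018*t^6*s -
      289835*t^5*s^2 - 773122*t^4*s^3 - 117649*t^3*s^4 - 8624*t^5*s - 93296*t^4*s^2 -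
      67228*t^3*s^3 - 5915*t^4*s - 15778*t^3*s^2 - 2401*t^2*s^3 - 1904*t^3*s - 1372*t^2*s^2 -
      322*t^2*s - 49*t*s^2 - 28*t*s - s = 0 := by
  have h1 : s^1*(t*x^4)^1 = 1 := by rw [← mul_pow, hs, one_pow]
  have h2 : s^2*(t*x^4)^2 = 1 := by rw [← mul_pow, hs, one_pow]
  have h3 : s^3*(t*x^4)^3 = 1 := by rw [← mul_pow, hs, one_pow]
  have h4 : s^4*(t*x^4)^4 = 1 := by rw [← mul_pow, hs, one_pow]
  have h5 : s^5*(t*x^4)^5 = 1 := by rw [← mul_pow, hs, one_pow]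
  have h6 : s^6*(t*x^4)^6 = 1 := by rw [← mul_pow, hs, one_pow]
  have h7 : s^7*(t*x^4)^7 = 1 := by rw [← mul_pow, hs, one_pow]
  have hy : (t*x^4)^8 ≠ 0 := by
    apply pow_ne_zero
    rintro h
    rw [h, mul_zero] at hs
    exact zero_ne_one hs
  apply mul_right_cancel₀ hy
  clear hs hy
  linear_combination (-4018*t^6 - 8624*t^5 - 5915*t^4 - 1904*t^3 - 322*t^2 - 28*t - 1)*(t*x^4)^7
      * h1 + (-422576*t^6 - 289835*t^5 - 93296*t^4 - 15778*t^3 - 1372*t^2 - 49*t)*(t*x^4)^6 * h2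
      + (-14201915*t^6 - 4571504*t^5 - 773122*t^4 - 67228*t^3 - 2401*t^2)*(t*x^4)^5 * h3 +
      (-224003696*t^6 - 37882978*t^5 - 3294172*t^4 - 117649*t^3)*(t*x^4)^4 * h4 +
      (-1856265922*t^6 - 161414428*t^5 - 5764801*t^4)*(t*x^4)^3 * h5 + (-7909306972*t^6 -
      282475249*t^5)*(t*x^4)^2 * h6 + (-13841287201*t^6)*(t*x^4)^1 * h7 + t^7 * (-x^21 + 7*x^20
      - 28*x^19 + 98*x^18 + 21*x^17*(-(t*x^4)) - 343*x^17 - 133*x^16*(-(t*x^4)) + 1029*x^16 +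
      490*x^15*(-(t*x^4)) - x^14*(-(t*x^4))^2 - 2744*x^15 - 1617*x^14*(-(t*x^4)) -
      161*x^13*(-(t*x^4))^2 + 7203*x^14 + 5488*x^13*(-(t*x^4)) + 924*x^12*(-(t*x^4))^2 -
      19208*x^13 - 16121*x^12*(-(t*x^4)) - 3136*x^11*(-(t*x^4))^2 + 14*x^10*(-(t*x^4))^3 +
      50421*x^12 + 43218*x^11*(-(t*x^4)) + 9555*x^10*(-(t*x^4))^2 + 511*x^9*(-(t*x^4))^3 -
      134456*x^11 - 112847*x^10*(-(t*x^4)) - 31213*x^9*(-(t*x^4))^2 - 2597*x^8*(-(t*x^4))^3 -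
      x^7*(-(t*x^4))^4 + 352947*x^10 + 302526*x^9*(-(t*x^4)) + 88494*x^8*(-(t*x^4))^2 +
      7644*x^7*(-(t*x^4))^3 - 56*x^6*(-(t*x^4))^4 - 941192*x^9 - 789929*x^8*(-(t*x^4)) -
      218491*x^7*(-(t*x^4))^2 - 18179*x^6*(-(t*x^4))^3 - 511*x^5*(-(t*x^4))^4 + 2470629*x^8 +
      1882384*x^7*(-(t*x^4)) + 468195*x^6*(-(t*x^4))^2 + 53508*x^5*(-(t*x^4))^3 +
      2058*x^4*(-(t*x^4))^4 + 7*x^3*(-(t*x^4))^5 - 5764801*x^7 - 3882417*x^6*(-(t*x^4)) -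
      1075648*x^5*(-(t*x^4))^2 - 127253*x^4*(-(t*x^4))^3 - 3577*x^3*(-(t*x^4))^4 +
      35*x^2*(-(t*x^4))^5 + 11529602*x^6 + 8235430*x^5*(-(t*x^4)) + 2218524*x^4*(-(t*x^4))^2 +
      175273*x^3*(-(t*x^4))^3 - 2744*x^2*(-(t*x^4))^4 + 49*x*(-(t*x^4))^5 - (-(t*x^4))^6 -
      23059204*x^5 - 15647317*x^4*(-(t*x^4)) - 2705927*x^3*(-(t*x^4))^2 + 33614*x^2*(-(t*x^4))^3
      - 343*x*(-(t*x^4))^4 + 40353607*x^4 + 17294403*x^3*(-(t*x^4)) - 117649*x^2*(-(t*x^4))^2 -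
      40353607*x^3) * hG
/-- Coefficients of the degree 7 modular equation. -/
def modL : List (ℕ × ℕ × ℤ) :=
  [(1, 1, 28), (1, 2, 49), (2, 1, 322), (2, 2, 1372), (2, 3, 2401), (3, 1, 1904), (3, 2, 15778),
   (3, 3, 67228), (3, 4, 117649), (4, 1, 5915), (4, 2, 93296), (4, 3, 773122), (4, 4, 3294172),
   (4, 5, 5764801), (5, 1, 8624), (5, 2, 289835), (5, 3, 4571504), (5, 4, 37882978), (5, 5,
   161414428), (5, 6, 282475249), (6, 1, 4018), (6, 2, 422576), (6, 3, 14201915), (6, 4,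
   224003696), (6, 5, 1856265922), (6, 6, 7909306972), (6, 7, 13841287201)]

lemma modL_good : ∀ x ∈ modL, 1 ≤ x.1 ∧ x.1 ≤ 6 ∧ ∃ e : ℕ, (7:ℤ)^e ∣ x.2.2 ∧
    7 * (x.2.1 : ℤ) + x.1 - 7 ≤ 4 * e := by
  have h : ∀ x ∈ modL, 1 ≤ x.1 ∧ x.1 ≤ 6 ∧ ∃ e ∈ Finset.range 13, (7:ℤ)^e ∣ x.2.2 ∧
    7 * (x.2.1 : ℤ) + x.1 - 7 ≤ 4 * e := by
    decide +kernel
  intro x hx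
  obtain ⟨h1, h2, e, -, h3⟩ := h x hx
  exact ⟨h1, h2, e, h3⟩

lemma modL_sum {R : Type*} [CommRing R] (t s : R)
    (h : -13841287201*t^6*s^7 - 7909306972*t^6*s^6 - 1856265922*t^6*s^5 - 282475249*t^5*s^6 -
      224003696*t^6*s^4 - 161414428*t^5*s^5 - 14201915*t^6*s^3 - 37882978*t^5*s^4 -
      5764801*t^4*s^5 - 422576*t^6*s^2 - 4571504*t^5*s^3 - 3294172*t^4*s^4 + t^7 - 4018*t^6*s -
      289835*t^5*s^2 - 773122*t^4*s^3 - 117649*t^3*s^4 - 8624*t^5*s - 93296*t^4*s^2 -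
      67228*t^3*s^3 - 5915*t^4*s - 15778*t^3*s^2 - 2401*t^2*s^3 - 1904*t^3*s - 1372*t^2*s^2 -
      322*t^2*s - 49*t*s^2 - 28*t*s - s = 0) :
    t ^ 7 = s + (modL.map fun x => (x.2.2 : R) * (t ^ x.1 * s ^ x.2.1)).sum := by
  simp only [modL, List.map_cons, List.map_nil, List.sum_cons, List.sum_nil]
  push_cast
  linear_combination h

lemma hasForm_iff (p : ℤ →₀ ℤ) (k γ : ℤ) : HasForm p k γ ↔
    ∀ n : ℤ, ∃ c : ℤ, (p n : ℚ) = (c : ℚ) * (7 : ℚ) ^ ((7 * n - k + γ) / 4) := by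
  unfold HasForm
  have : ∀ m : ℤ, ⌊(m : ℚ) / 4⌋ = m / 4 := by
    intro m
    have := Rat.floor_intCast_div_natCast m 4
    simpa using this
  simp only [this]

lemma HasForm.scale {p : ℤ →₀ ℤ} {k γ : ℤ} (h : HasForm p k γ) (k' l c : ℤ) (e : ℕ)
    (hc : (7:ℤ)^e ∣ c) (he : 7 * l - k' + k ≤ 4 * e) :
    HasForm (c • Finsupp.equivMapDomain (Equiv.addRight l) p) k' γ := by
  rw [hasForm_iff] at h ⊢
  intro n
  obtain ⟨c1, h1⟩ := h (n - l)
  obtain ⟨c0, rfl⟩ := hc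
  have hd : (7 * n - k' + γ) / 4 ≤ e + (7 * (n - l) - k + γ) / 4 := by omega
  obtain ⟨d, hd⟩ := Int.le.dest hd
  refine ⟨c0 * c1 * 7 ^ d, ?_⟩
  have : (Finsupp.equivMapDomain (Equiv.addRight l) p) n = p (n - l) := by
    simp [Finsupp.equivMapDomain_apply, sub_eq_add_neg]
  simp only [Finsupp.smul_apply, this, smul_eq_mul]
  push_cast
  rw [h1]
  have h7 : (7:ℚ) ≠ 0 := by norm_num
  have e1 : (7:ℚ)^e * (7:ℚ) ^ ((7 * (n - l) - k + γ) / 4) =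
      (7:ℚ)^d * (7:ℚ) ^ ((7 * n - k' + γ) / 4) := by
    rw [← zpow_natCast, ← zpow_natCast, ← zpow_add₀ h7, ← zpow_add₀ h7, ← hd, add_comm]
  linear_combination (c0 * c1 : ℚ) * e1

lemma HasForm.add {p q : ℤ →₀ ℤ} {k γ : ℤ} (hp : HasForm p k γ) (hq : HasForm q k γ) :
    HasForm (p + q) k γ := by
  intro n
  obtain ⟨c, hc⟩ := hp n
  obtain ⟨d, hd⟩ := hq n
  refine ⟨c + d, ?_⟩
  simp only [Finsupp.add_apply]
  rw [Int.cast_add, Int.cast_add, hc, hd, add_mul]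

lemma evalT_eq (T : (LaurentSeries ℤ)ˣ) (p : ℤ →₀ ℤ) : evalT T p =
    Finsupp.linearCombination ℤ (fun n : ℤ => ((T ^ n : (LaurentSeries ℤ)ˣ) : LaurentSeries ℤ)) p :=
  rfl

lemma evalT_add (T : (LaurentSeries ℤ)ˣ) (p q : ℤ →₀ ℤ) :
    evalT T (p + q) = evalT T p + evalT T q := by
  simp only [evalT_eq, map_add]

lemma evalT_scale (T : (LaurentSeries ℤ)ˣ) (p : ℤ →₀ ℤ) (l c : ℤ) :
    evalT T (c • Finsupp.equivMapDomain (Equiv.addRight l) p) =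
      (c : LaurentSeries ℤ) * (((T ^ l : (LaurentSeries ℤ)ˣ) : LaurentSeries ℤ) * evalT T p) := by
  rw [evalT_eq, map_smul, Finsupp.linearCombination_equivMapDomain, zsmul_eq_mul]
  congr 1
  rw [evalT_eq, Finsupp.linearCombination_apply, Finsupp.linearCombination_apply, Finsupp.mul_sum]
  apply Finsupp.sum_congr
  intro n _
  simp only [Function.comp_apply, Equiv.coe_addRight, zpow_add, Units.val_mul, zsmul_eq_mul]
  ring

/-- Having a representation of weight `k`. -/
def Good (T : (LaurentSeries ℤ)ˣ) (v₁ v₂ v₃ : LaurentSeries ℤ) (γ₁ γ₂ γ₃ k : ℤ)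
    (x : LaurentSeries ℤ) : Prop :=
  ∃ p₁ p₂ p₃ : ℤ →₀ ℤ,
        x = v₁ * evalT T p₁ + v₂ * evalT T p₂ + v₃ * evalT T p₃ ∧
        HasForm p₁ k γ₁ ∧ HasForm p₂ k γ₂ ∧ HasForm p₃ k γ₃

section
variable {T : (LaurentSeries ℤ)ˣ} {v₁ v₂ v₃ : LaurentSeries ℤ} {γ₁ γ₂ γ₃ : ℤ}

lemma Good.add {k : ℤ} {x y : LaurentSeries ℤ} (hx : Good T v₁ v₂ v₃ γ₁ γ₂ γ₃ k x)
    (hy : Good T v₁ v₂ v₃ γ₁ γ₂ γ₃ k y) : Good T v₁ v₂ v₃ γ₁ γ₂ γ₃ k (x + y) := by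
  obtain ⟨p1, p2, p3, h, h1, h2, h3⟩ := hx
  obtain ⟨q1, q2, q3, g, g1, g2, g3⟩ := hy
  refine ⟨p1 + q1, p2 + q2, p3 + q3, ?_, h1.add g1, h2.add g2, h3.add g3⟩
  rw [h, g, evalT_add, evalT_add, evalT_add]; ring

lemma Good.scale {k : ℤ} {x : LaurentSeries ℤ} (hx : Good T v₁ v₂ v₃ γ₁ γ₂ γ₃ k x)
    (k' l c : ℤ) (e : ℕ) (hc : (7:ℤ)^e ∣ c) (he : 7 * l - k' + k ≤ 4 * e) :
    Good T v₁ v₂ v₃ γ₁ γ₂ γ₃ k'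
      ((c : LaurentSeries ℤ) * (((T ^ l : (LaurentSeries ℤ)ˣ) : LaurentSeries ℤ) * x)) := by
  obtain ⟨p1, p2, p3, h, h1, h2, h3⟩ := hx
  refine ⟨_, _, _, ?_, h1.scale k' l c e hc he, h2.scale k' l c e hc he, h3.scale k' l c e hc he⟩
  rw [h, evalT_scale, evalT_scale, evalT_scale]; ring

lemma Good.zero {k : ℤ} : Good T v₁ v₂ v₃ γ₁ γ₂ γ₃ k 0 := by
  refine ⟨0, 0, 0, ?_, ?_, ?_, ?_⟩
  · simp [evalT]
  all_goals exact fun n => ⟨0, by simp⟩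

lemma Good.listSum {k : ℤ} {ι : Type*} (L : List ι) (f : ι → LaurentSeries ℤ)
    (h : ∀ i ∈ L, Good T v₁ v₂ v₃ γ₁ γ₂ γ₃ k (f i)) :
    Good T v₁ v₂ v₃ γ₁ γ₂ γ₃ k (L.map f).sum := by
  induction L with
  | nil => simpa using Good.zero
  | cons a L ih =>
    simp only [List.map_cons, List.sum_cons]
    exact (h a (by simp)).add (ih fun i hi => h i (by simp [hi]))
end

/-- Multiplication by 7 as an order embedding. -/
def mul7emb : ℤ ↪o ℤ :=
  OrderEmbedding.ofStrictMono (fun n => 7 * n) (fun a b h => by dsimp only; omega)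

/-- The substitution `q ↦ q^7`. -/
def V7 : LaurentSeries ℤ →+* LaurentSeries ℤ :=
  HahnSeries.embDomainRingHom (AddMonoidHom.mulLeft (7:ℤ))
    (fun a b h => by simpa using h) (fun a b => by simp)

lemma V7_coeff (f : LaurentSeries ℤ) (n : ℤ) : (V7 f).coeff (7 * n) = f.coeff n := by
  have := HahnSeries.embDomain_coeff (f := mul7emb) (x := f) (a := n)
  exact this

lemma V7_coeff_zero (f : LaurentSeries ℤ) (n : ℤ) (h : ¬ (7 ∣ n)) : (V7 f).coeff n = 0 := by
  refine HahnSeries.embDomain_of_notMem_range (f := mul7emb) (x := f) (b := n) ?_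
  rintro ⟨m, rfl⟩
  exact h ⟨m, rfl⟩

lemma coeff_V7_mul (f g h : LaurentSeries ℤ) (hh : ∀ n, h.coeff n = g.coeff (7 * n)) (n : ℤ) :
    (V7 f * g).coeff (7 * n) = (f * h).coeff n := by
  rw [HahnSeries.coeff_mul, HahnSeries.coeff_mul]
  symm
  apply Finset.sum_bij_ne_zero (fun (a : ℤ × ℤ) _ _ => ((7 * a.1, 7 * a.2) : ℤ × ℤ))
  · rintro ⟨a, b⟩ h1 h2
    simp only [Finset.mem_antidiagonal, HahnSeries.mem_support] at h1 ⊢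
    rw [V7_coeff, ← hh]
    refine ⟨h1.1, h1.2.1, ?_⟩
    rw [← h1.2.2]; ring
  · rintro ⟨a, b⟩ _ _ ⟨a', b'⟩ _ _ h
    simp only [Prod.mk.injEq] at h ⊢
    omega
  · rintro ⟨a, b⟩ h1 h2
    simp only [Finset.mem_antidiagonal, HahnSeries.mem_support] at h1
    by_cases hd : 7 ∣ a
    · obtain ⟨a, rfl⟩ := hd
      obtain ⟨b, rfl⟩ : 7 ∣ b := by omega
      rw [V7_coeff, ← hh] at h1
      refine ⟨(a, b), ?_, ?_, rfl⟩
      · simp only [Finset.mem_antidiagonal, HahnSeries.mem_support]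
        exact ⟨h1.1, h1.2.1, by omega⟩
      · exact mul_ne_zero h1.1 h1.2.1
    · exact absurd (V7_coeff_zero f a hd) h1.1
  · rintro ⟨a, b⟩ h1 h2
    simp only [V7_coeff, hh]

theorem main_of_modular
    (T : (LaurentSeries ℤ)ˣ)
    (hF : (T : LaurentSeries ℤ) ^ 7 = V7 T +
      (modL.map fun x => (x.2.2 : LaurentSeries ℤ) * ((T:LaurentSeries ℤ) ^ x.1 * (V7 T) ^ x.2.1)).sum)
    (U : LaurentSeries ℤ → LaurentSeries ℤ)
    (hU : ∀ (f : LaurentSeries ℤ) (n : ℤ), (U f).coeff n = f.coeff (7 * n))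
    (u v₁ v₂ v₃ : LaurentSeries ℤ) (l γ₁ γ₂ γ₃ : ℤ)
    (h : ∀ k : ℤ, l ≤ k → k ≤ l + 6 → Good T v₁ v₂ v₃ γ₁ γ₂ γ₃ k (U (u * ↑(T ^ k)))) :
    ∀ k : ℤ, Good T v₁ v₂ v₃ γ₁ γ₂ γ₃ k (U (u * ↑(T ^ k))) := by
  have hVU : ∀ f g, U (V7 f * g) = f * U g := by
    intro f g
    ext n
    rw [hU, coeff_V7_mul f g (U g) (hU g)]
  have hadd : ∀ f g, U (f + g) = U f + U g := by
    intro f g; ext n; simp [hU]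
  have hzero : U 0 = 0 := by
    ext n; simp [hU]
  have hsum : ∀ (L : List (ℕ × ℕ × ℤ)) (f : ℕ × ℕ × ℤ → LaurentSeries ℤ),
      U ((L.map f).sum) = (L.map fun x => U (f x)).sum := by
    intro L f
    induction L with
    | nil => simpa using hzero
    | cons a L ih => simp [hadd, ih]
  -- the recurrence
  have hrec : ∀ k : ℤ, U (u * ↑(T ^ (k + 7))) = T * U (u * ↑(T ^ k)) +
      (modL.map fun x => (x.2.2 : LaurentSeries ℤ) * (((T ^ (x.2.1 : ℤ) : (LaurentSeries ℤ)ˣ) :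
        LaurentSeries ℤ) * U (u * ↑(T ^ (k + x.1))))).sum := by
    intro k
    have e1 : u * ((T ^ (k + 7) : (LaurentSeries ℤ)ˣ) : LaurentSeries ℤ) =
        V7 T * (u * ↑(T ^ k)) + (modL.map fun x => V7 ((x.2.2 : LaurentSeries ℤ) *
          (T : LaurentSeries ℤ) ^ x.2.1) * (u * ↑(T ^ (k + x.1)))).sum := by
      have : ((T ^ (k + 7) : (LaurentSeries ℤ)ˣ) : LaurentSeries ℤ) = ↑(T ^ k) * (T : LaurentSeries ℤ) ^ 7 := by
        rw [zpow_add, Units.val_mul]; rfl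
      rw [this, hF, mul_add, mul_add, ← List.sum_map_mul_left, ← List.sum_map_mul_left]
      congr 1
      · ring
      · congr 1
        apply List.map_congr_left
        intro x _
        rw [zpow_add, Units.val_mul, map_mul, map_pow, map_intCast, zpow_natCast, Units.val_pow_eq_pow_val]
        ring
    rw [e1, hadd, hVU, hsum]
    congr 1
    congr 1
    apply List.map_congr_left
    intro x _
    rw [hVU, zpow_natCast, Units.val_pow_eq_pow_val]
    ring
  suffices H : ∀ n : ℕ, ∀ k : ℤ, l - n ≤ k → k ≤ l + 6 + n →
      Good T v₁ v₂ v₃ γ₁ γ₂ γ₃ k (U (u * ↑(T ^ k))) by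
    intro k
    exact H (k - l).natAbs k (by omega) (by omega)
  intro n
  induction n with
  | zero => intro k h1 h2; exact h k (by simpa using h1) (by simpa using h2)
  | succ n ih =>
    intro k h1 h2
    push_cast at h1 h2
    by_cases c1 : k = l + 7 + n
    · obtain ⟨k, rfl⟩ : ∃ k', k = k' + 7 := ⟨k - 7, by ring⟩
      rw [hrec]
      refine Good.add ?_ (Good.listSum _ _ ?_)
      · have := (ih k (by omega) (by omega)).scale (k + 7) 1 1 0 (by simp) (by omega)
        simpa using this
      · intro x hx
        obtain ⟨a1, a2, e, h3, h4⟩ := modL_good x hx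
        exact (ih (k + x.1) (by omega) (by omega)).scale (k + 7) _ _ e h3 (by omega)
    · by_cases c2 : k = l - n - 1
      · have e2 : U (u * ↑(T ^ k)) = ((1 : ℤ) : LaurentSeries ℤ) * (((T ^ (-1 : ℤ) : (LaurentSeries ℤ)ˣ) :
            LaurentSeries ℤ) * U (u * ↑(T ^ (k + 7)))) +
            (modL.map fun x => ((-x.2.2 : ℤ) : LaurentSeries ℤ) * (((T ^ (x.2.1 - 1 : ℤ) : (LaurentSeries ℤ)ˣ) :
        LaurentSeries ℤ) * U (u * ↑(T ^ (k + x.1))))).sum := by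
          rw [hrec, mul_add]
          have e3 : ((T ^ (-1 : ℤ) : (LaurentSeries ℤ)ˣ) : LaurentSeries ℤ) * T = 1 := by
            rw [zpow_neg_one, Units.inv_mul]
          have e4 : (modL.map fun x => ((-x.2.2 : ℤ) : LaurentSeries ℤ) * (((T ^ (x.2.1 - 1 : ℤ) : (LaurentSeries ℤ)ˣ) :
            LaurentSeries ℤ) * U (u * ↑(T ^ (k + x.1))))).sum = - (((T ^ (-1 : ℤ) : (LaurentSeries ℤ)ˣ) :
            LaurentSeries ℤ) * (modL.map fun x => (x.2.2 : LaurentSeries ℤ) * (((T ^ (x.2.1 : ℤ) : (LaurentSeries ℤ)ˣ) :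
        LaurentSeries ℤ) * U (u * ↑(T ^ (k + x.1))))).sum) := by
            rw [← neg_mul, ← List.sum_map_mul_left]
            congr 1
            apply List.map_congr_left
            intro x _
            rw [sub_eq_add_neg, zpow_add, Units.val_mul]
            push_cast
            ring
          rw [e4, ← mul_assoc, e3]
          push_cast
          ring
        rw [e2]
        refine Good.add ?_ (Good.listSum _ _ ?_)
        · exact (ih (k + 7) (by omega) (by omega)).scale k (-1) 1 0 (by simp) (by omega)
        · intro x hx
          obtain ⟨a1, a2, e, h3, h4⟩ := modL_good x hx
          exact (ih (k + x.1) (by omega) (by omega)).scale k _ _ e (by simpa using h3) (by omega)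
      · exact ih k (by omega) (by omega)

lemma sum_shift {R : Type*} [CommRing R] (f : ℤ → R) (hf : f (-1) = - f 0) (M : ℕ) :
    ∑ j ∈ Finset.range (M + 1), (2 * (j : R) + 1) * (f ((j : ℤ) - 1) + f ((j : ℤ) + 1)) =
      2 * ∑ j ∈ Finset.range (M + 1), (2 * (j : R) + 1) * f (j : ℤ) +
        (2 * (M : R) + 1) * f ((M : ℤ) + 1) - (2 * (M : R) + 3) * f (M : ℤ) := by
  induction M with
  | zero => simp [hf]; ring
  | succ M ih =>
    rw [Finset.sum_range_succ, ih, Finset.sum_range_succ _ (M + 1)]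
    push_cast
    rw [show (M : ℤ) + 1 - 1 = M by ring]
    ring

/-- Terms of the finite Jacobi identity. -/
def jacA {R : Type*} [CommRing R] (q : Rˣ) (r : ℤ → R) (P : ℕ → R) (n : ℕ) (j : ℤ) : R :=
  (((-1 : Rˣ) ^ j : Rˣ) : R) * ((q ^ (j * (j + 1) / 2) : Rˣ) : R) * P (2 * n + 1) *
    r (n - j) * r (n + 1 + j)

lemma jacA_rec {R : Type*} [CommRing R] (q : Rˣ) (r : ℤ → R) (P : ℕ → R)
    (hr : ∀ m : ℤ, (1 - ((q ^ m : Rˣ) : R)) * r m = r (m - 1))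
    (hP : ∀ n, P (n + 1) = P n * (1 - (q : R) ^ (n + 1))) (n : ℕ) (j : ℤ) :
    jacA q r P (n + 1) j = (1 + (q : R) ^ (2 * n + 2)) * jacA q r P n j -
      (q : R) ^ (n + 1) * (jacA q r P n (j - 1) + jacA q r P n (j + 1)) := by
  unfold jacA
  have t1 : (j - 1) * (j - 1 + 1) / 2 = j * (j + 1) / 2 + (-j) := by
    rw [← Int.add_mul_ediv_right _ _ (by norm_num : (2:ℤ) ≠ 0)]
    congr 1; ring
  have t2 : (j + 1) * (j + 1 + 1) / 2 = j * (j + 1) / 2 + (j + 1) := by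
    rw [← Int.add_mul_ediv_right _ _ (by norm_num : (2:ℤ) ≠ 0)]
    congr 1; ring
  have s1 : ((((-1 : Rˣ) ^ (j - 1) : Rˣ)) : R) = - (((-1 : Rˣ) ^ j : Rˣ) : R) := by
    rw [zpow_sub]; simp
  have s2 : ((((-1 : Rˣ) ^ (j + 1) : Rˣ)) : R) = - (((-1 : Rˣ) ^ j : Rˣ) : R) := by
    rw [zpow_add]; simp
  rw [t1, t2, s1, s2]
  have hP2 : P (2 * (n + 1) + 1) =
      P (2 * n + 1) * (1 - (q : R) ^ (2 * n + 2)) * (1 - (q : R) ^ (2 * n + 3)) := by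
    rw [show 2 * (n + 1) + 1 = (2 * n + 2) + 1 by ring, hP, hP]
  rw [hP2]
  push_cast
  -- reduce all r's
  have r1 : r ((n : ℤ) - j) = (1 - ((q ^ ((n : ℤ) + 1 - j) : Rˣ) : R)) * r ((n : ℤ) + 1 - j) := by
    rw [hr]; congr 1; ring
  have r2 : r ((n : ℤ) - (j + 1)) = (1 - ((q ^ ((n : ℤ) - j) : Rˣ) : R)) * r ((n : ℤ) - j) := by
    rw [hr]; congr 1; ring
  have r3 : r ((n : ℤ) + 1 + j) = (1 - ((q ^ ((n : ℤ) + 2 + j) : Rˣ) : R)) * r ((n : ℤ) + 2 + j) := by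
    rw [hr]; congr 1; ring
  have r4 : r ((n : ℤ) + 1 + (j - 1)) = (1 - ((q ^ ((n : ℤ) + 1 + j) : Rˣ) : R)) * r ((n : ℤ) + 1 + j) := by
    rw [hr]; congr 1; ring
  rw [r2, r4, r1, r3, show (n : ℤ) - (j - 1) = n + 1 - j by ring,
    show (n : ℤ) + 1 + (j + 1) = n + 2 + j by ring, show (n : ℤ) + 1 + 1 + j = n + 2 + j by ring]
  generalize r ((n : ℤ) + 1 - j) = x
  generalize r ((n : ℤ) + 2 + j) = y
  generalize P (2 * n + 1) = p
  generalize (((-1 : Rˣ) ^ j : Rˣ) : R) = s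
  have z1 : ((q ^ ((n : ℤ) + 1 - j) : Rˣ) : R) = (q : R) ^ n * q * ((q ^ (-j) : Rˣ) : R) := by
    rw [sub_eq_add_neg, zpow_add, zpow_add]; simp
  have z2 : ((q ^ ((n : ℤ) - j) : Rˣ) : R) = (q : R) ^ n * ((q ^ (-j) : Rˣ) : R) := by
    rw [sub_eq_add_neg, zpow_add]; simp
  have z3 : ((q ^ ((n : ℤ) + 2 + j) : Rˣ) : R) = (q : R) ^ n * q ^ 2 * ((q ^ j : Rˣ) : R) := by
    rw [zpow_add, zpow_add]; simp
  have z4 : ((q ^ ((n : ℤ) + 1 + j) : Rˣ) : R) = (q : R) ^ n * q * ((q ^ j : Rˣ) : R) := by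
    rw [zpow_add, zpow_add]; simp
  have z5 : ((q ^ (j * (j + 1) / 2 + -j) : Rˣ) : R) =
      ((q ^ (j * (j + 1) / 2) : Rˣ) : R) * ((q ^ (-j) : Rˣ) : R) := by
    rw [zpow_add, Units.val_mul]
  have z6 : ((q ^ (j * (j + 1) / 2 + (j + 1)) : Rˣ) : R) =
      ((q ^ (j * (j + 1) / 2) : Rˣ) : R) * (((q ^ j : Rˣ) : R) * q) := by
    rw [zpow_add, Units.val_mul, zpow_add, Units.val_mul, zpow_one]
  have zz : ((q ^ j : Rˣ) : R) * ((q ^ (-j) : Rˣ) : R) = 1 := by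
    rw [← Units.val_mul, ← zpow_add]; simp
  rw [z1, z2, z3, z4, z5, z6]
  generalize ((q ^ (j * (j + 1) / 2) : Rˣ) : R) = w
  generalize ((q ^ (-j) : Rˣ) : R) = Z' at *
  generalize ((q ^ j : Rˣ) : R) = Z at *
  generalize (q : R) = q at *
  have e1 : q ^ (2 * n + 2) = (q ^ n) ^ 2 * q ^ 2 := by ring
  have e2 : q ^ (2 * n + 3) = (q ^ n) ^ 2 * q ^ 3 := by ring
  have e3 : q ^ (n + 1) = (q ^ n) * q := by ring
  rw [e1, e2, e3]
  generalize q ^ n = Q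
  linear_combination -(s*w*p*x*y)*((1+Q^2*q^2)*Q^2*q^3 - 2*Q^2*q^2*(1+q) + Q^3*q^4*Z+Q^3*q^3*Z')*zz

lemma jac_fin {R : Type*} [CommRing R] (q : Rˣ) (r : ℤ → R) (P : ℕ → R) (hr0 : r 0 = 1)
    (hneg : ∀ m < 0, r m = 0)
    (hr : ∀ m : ℤ, (1 - ((q ^ m : Rˣ) : R)) * r m = r (m - 1)) (hP0 : P 0 = 1)
    (hP : ∀ n, P (n + 1) = P n * (1 - (q : R) ^ (n + 1))) (n : ℕ) :
    ∀ M, n ≤ M → ∑ j ∈ Finset.range (M + 1), (2 * (j : R) + 1) * jacA q r P n (j : ℤ) = P n ^ 2 := by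
  induction n with
  | zero =>
    intro M _
    rw [Finset.sum_eq_single_of_mem 0 (by simp)]
    · have := hr 1
      simp only [zpow_one, sub_self, hr0] at this
      simp [jacA, hr0, hP, hP0, this]
    · intro j _ hj
      have : r (((0 : ℕ) : ℤ) - (j : ℤ)) = 0 := hneg _ (by omega)
      rw [jacA, this]; ring
  | succ n ih =>
    intro M hM
    simp only [jacA_rec q r P hr hP n]
    have h0 : ∀ j : ℕ, n < j → jacA q r P n (j : ℤ) = 0 := by
      intro j hj
      have : r ((n : ℤ) - (j : ℤ)) = 0 := hneg _ (by omega)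
      rw [jacA, this]; ring
    have hs := sum_shift (jacA q r P n) (by
      simp only [jacA]
      rw [show (n : ℤ) - -1 = n + 1 by ring, show (n : ℤ) + 1 + -1 = n by ring,
        show (n : ℤ) - 0 = n by ring, show (n : ℤ) + 1 + 0 = n + 1 by ring]
      simp; ring) M
    have hM1 := h0 M (by omega)
    have hM2 := h0 (M + 1) (by omega)
    push_cast at hM2
    rw [hM1, hM2] at hs
    have e : ∀ j : ℕ, (2 * (j : R) + 1) * ((1 + (q : R) ^ (2 * n + 2)) * jacA q r P n j -
      (q : R) ^ (n + 1) * (jacA q r P n (j - 1) + jacA q r P n (j + 1))) =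
      (1 + (q : R) ^ (2 * n + 2)) * ((2 * (j : R) + 1) * jacA q r P n j) -
      (q : R) ^ (n + 1) * ((2 * (j : R) + 1) * (jacA q r P n (j - 1) + jacA q r P n (j + 1))) := by
      intro j; ring
    simp only [e]
    rw [Finset.sum_sub_distrib, ← Finset.mul_sum, ← Finset.mul_sum, hs, ih M (by omega), hP]
    ring

open PowerSeries in
/-- Finite products. -/
def PP (n : ℕ) : PowerSeries ℤ := ∏ k ∈ Finset.range n, (1 - (X : PowerSeries ℤ) ^ (k + 1))

lemma PP_zero : PP 0 = 1 := by simp [PP]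

open PowerSeries in
lemma PP_succ (n : ℕ) : PP (n + 1) = PP n * (1 - X ^ (n + 1)) := by
  simp [PP, Finset.prod_range_succ]

open PowerSeries in
lemma PP_const (n : ℕ) : constantCoeff (PP n) = 1 := by
  simp [PP, map_prod]

/-- Inverses of the finite products. -/
def RR (n : ℕ) : PowerSeries ℤ := PowerSeries.invOfUnit (PP n) 1

lemma PP_mul_RR (n : ℕ) : PP n * RR n = 1 := PowerSeries.mul_invOfUnit _ _ (by simp [PP_const])

lemma RR_zero : RR 0 = 1 := by
  have := PP_mul_RR 0
  rwa [PP_zero, one_mul] at this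

open PowerSeries in
lemma RR_succ (n : ℕ) : (1 - X ^ (n + 1)) * RR (n + 1) = RR n := by
  have h1 := PP_mul_RR n
  have h2 := PP_mul_RR (n + 1)
  rw [PP_succ] at h2
  linear_combination (RR n) * h2 - (1 - X ^ (n + 1)) * RR (n + 1) * h1

/-- The variable as a unit. -/
def qU : (LaurentSeries ℤ)ˣ :=
  ⟨HahnSeries.single 1 1, HahnSeries.single (-1) 1, by simp, by simp⟩

open PowerSeries in
lemma qU_pow (n : ℕ) : HahnSeries.ofPowerSeries ℤ ℤ (X ^ n) = (qU : LaurentSeries ℤ) ^ n := by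
  rw [map_pow, HahnSeries.ofPowerSeries_X]; rfl

open PowerSeries in
lemma jac_ps (n : ℕ) : ∑ j ∈ Finset.range (n + 1), (2 * (j : PowerSeries ℤ) + 1) *
    ((-1) ^ j * X ^ (j * (j + 1) / 2) * PP (2 * n + 1) * RR (n - j) * RR (n + 1 + j)) = PP n ^ 2 := by
  set φ := HahnSeries.ofPowerSeries ℤ ℤ with hφ
  apply HahnSeries.ofPowerSeries_injective (Γ := ℤ) (R := ℤ)
  have := jac_fin qU (fun m : ℤ => if m < 0 then 0 else φ (RR m.toNat)) (fun n => φ (PP n))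
    (by simp [RR_zero]) (by intro m hm; simp [hm])
    (by
      intro m
      rcases lt_trichotomy m 0 with h | h | h
      · simp [h, show m - 1 < 0 by omega]
      · subst h; simp
      · obtain ⟨n, rfl⟩ : ∃ n : ℕ, m = n + 1 := ⟨(m - 1).toNat, by omega⟩
        have h1 : ¬ ((n : ℤ) + 1 < 0) := by omega
        have h2 : ¬ ((n : ℤ) < 0) := by omega
        have h3 : ((n : ℤ) + 1).toNat = n + 1 := by omega
        simp only [h1, h2, h3, if_false, add_sub_cancel_right, Int.toNat_natCast]
        rw [← RR_succ n, map_mul, map_sub, map_one, qU_pow]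
        norm_cast)
    (by simp [PP_zero]) (by
      intro n
      rw [PP_succ, map_mul, map_sub, map_one, qU_pow]) n n le_rfl
  rw [map_pow, ← this, map_sum]
  apply Finset.sum_congr rfl
  intro j hj
  have hj : j ≤ n := by simpa [Nat.lt_succ_iff] using hj
  have h1 : ¬ ((n : ℤ) - j < 0) := by omega
  have h2 : ¬ ((n : ℤ) + 1 + j < 0) := by omega
  have h3 : ((n : ℤ) - j).toNat = n - j := by omega
  have h4 : ((n : ℤ) + 1 + j).toNat = n + 1 + j := by omega
  simp only [jacA, h1, h2, h3, h4, if_false, map_mul, map_add, map_natCast, map_one,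
    map_pow, map_neg, map_ofNat]
  have h5 : ((j : ℤ) * (j + 1) / 2) = ((j * (j + 1) / 2 : ℕ) : ℤ) := by push_cast; rfl
  have hX : φ X = (qU : LaurentSeries ℤ) := by rw [hφ, HahnSeries.ofPowerSeries_X]; rfl
  rw [h5, zpow_natCast, zpow_natCast, hX, Units.val_pow_eq_pow_val, Units.val_pow_eq_pow_val,
    Units.val_neg, Units.val_one]

open PowerSeries in
lemma coeff_prod_stable (b : ℕ) (hb : 0 < b) (d n : ℕ) (h : d + 1 ≤ n) :
    coeff d (∏ k ∈ Finset.range n, (1 - (X : PowerSeries ℤ) ^ (b * (k + 1)))) =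
    coeff d (J b) := by
  induction n, h using Nat.le_induction with
  | base => simp [J]
  | succ n hn ih =>
    rw [Finset.prod_range_succ, mul_sub, mul_one, map_sub, ih, coeff_mul_X_pow', if_neg, sub_zero]
    have : 1 * (n + 1) ≤ b * (n + 1) := Nat.mul_le_mul_right _ hb
    omega

open PowerSeries in
lemma PP_coeff (d n : ℕ) (h : d + 1 ≤ n) : coeff d (PP n) = coeff d (J 1) := by
  rw [← coeff_prod_stable 1 one_pos d n h]
  simp [PP]

open PowerSeries in
lemma jac_coeff (d : ℕ) : coeff d ((J 1) ^ 3) = ∑ j ∈ Finset.range (2 * (d + 1) + 1),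
    coeff d ((2 * (j : PowerSeries ℤ) + 1) * ((-1) ^ j * X ^ (j * (j + 1) / 2))) := by
  set N := d + 1 with hN
  let φ := Ideal.Quotient.mk (Ideal.span {(X : PowerSeries ℤ) ^ N})
  have hφ : ∀ f g, φ f = φ g → coeff d f = coeff d g := by
    intro f g h
    rw [Ideal.Quotient.mk_eq_mk_iff_sub_mem, Ideal.mem_span_singleton, X_pow_dvd_iff] at h
    have := h d (by omega)
    rw [map_sub] at this
    linarith
  have hPP : ∀ n, N ≤ n → φ (PP n) = φ (J 1) := by
    intro n hn
    rw [Ideal.Quotient.mk_eq_mk_iff_sub_mem, Ideal.mem_span_singleton, X_pow_dvd_iff]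
    intro m hm
    rw [map_sub, PP_coeff m n (by omega), sub_self]
  have hE : ∀ n, N ≤ n → φ (J 1) * φ (RR n) = 1 := by
    intro n hn
    rw [← hPP n hn, ← map_mul, PP_mul_RR, map_one]
  have hRR : ∀ n, N ≤ n → φ (RR n) = φ (RR N) := by
    intro n hn
    have h1 := hE n hn
    have h2 := hE N le_rfl
    linear_combination (-φ (RR n)) * h2 + φ (RR N) * h1
  have hX : ∀ m, N ≤ m → φ (X ^ m) = 0 := by
    intro m hm
    rw [Ideal.Quotient.eq_zero_iff_mem, Ideal.mem_span_singleton]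
    exact pow_dvd_pow _ hm
  rw [← map_sum]
  apply hφ
  have h := congrArg φ (jac_ps (2 * N))
  rw [map_sum, map_pow, hPP (2 * N) (by omega)] at h
  have h2 : ∀ j ∈ Finset.range (2 * N + 1), φ ((2 * (j : PowerSeries ℤ) + 1) *
    ((-1) ^ j * X ^ (j * (j + 1) / 2) * PP (2 * (2 * N) + 1) * RR (2 * N - j) * RR (2 * N + 1 + j)))
     = φ ((2 * (j : PowerSeries ℤ) + 1) * ((-1) ^ j * X ^ (j * (j + 1) / 2))) * φ (RR N) := by
    intro j _
    by_cases hj : N ≤ j * (j + 1) / 2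
    · simp only [map_mul φ, hX _ hj]; ring
    · have hj2 : j < N := by
        by_contra hc
        apply hj
        rcases Nat.eq_zero_or_pos j with h0 | h0
        · omega
        · have : 2 * j ≤ j * (j + 1) := by nlinarith
          omega
      simp only [map_mul φ]
      rw [hPP _ (by omega), hRR (2 * N - j) (by omega), hRR (2 * N + 1 + j) (by omega)]
      linear_combination (φ (2 * (j : PowerSeries ℤ) + 1) * (φ ((-1) ^ j) * φ (X ^ (j * (j + 1) / 2)))
        * φ (RR N)) * hE N le_rfl
  rw [Finset.sum_congr rfl h2, ← Finset.sum_mul, ← map_sum] at h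
  rw [map_pow]
  linear_combination (-φ (J 1)) * h + φ (∑ j ∈ Finset.range (2 * N + 1), (2 * (j : PowerSeries ℤ) + 1) * ((-1) ^ j * X ^ (j * (j + 1) / 2))) * hE N le_rfl

open PowerSeries in
lemma jac_term (d j : ℕ) : coeff d ((2 * (j : PowerSeries ℤ) + 1) * ((-1) ^ j * X ^ (j * (j + 1) / 2)))
    = if j * (j + 1) / 2 = d then (-1) ^ j * (2 * (j : ℤ) + 1) else 0 := by
  have : (2 * (j : PowerSeries ℤ) + 1) * ((-1) ^ j * X ^ (j * (j + 1) / 2)) =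
    C ((-1) ^ j * (2 * (j : ℤ) + 1)) * X ^ (j * (j + 1) / 2) := by
    simp; ring
  rw [this, coeff_C_mul, coeff_X_pow]
  simp [eq_comm]

open PowerSeries in
lemma jac_zero (d : ℕ) (h : ∀ j, j * (j + 1) / 2 ≠ d) : coeff d ((J 1) ^ 3) = 0 := by
  rw [jac_coeff]
  apply Finset.sum_eq_zero
  intro j _
  rw [jac_term, if_neg (h j)]

open PowerSeries in
lemma jac_tri (i : ℕ) : coeff (i * (i + 1) / 2) ((J 1) ^ 3) = (-1) ^ i * (2 * (i : ℤ) + 1) := by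
  have hd : ∀ j, 2 * (j * (j + 1) / 2) = j * (j + 1) := fun j =>
    Nat.mul_div_cancel' (Nat.even_mul_succ_self j).two_dvd
  rw [jac_coeff, Finset.sum_eq_single_of_mem i]
  · rw [jac_term, if_pos rfl]
  · rw [Finset.mem_range]
    have := hd i
    rcases Nat.eq_zero_or_pos i with h0 | h0
    · omega
    · have : 2 * i ≤ i * (i + 1) := by nlinarith
      omega
  · intro j _ hj
    rw [jac_term, if_neg]
    intro h
    apply hj
    have h1 := hd i
    have h2 := hd j
    rw [h, h1] at h2
    nlinarith [lt_trichotomy i j]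

open PowerSeries in
lemma J_one_eq : J 1 = pentagonalSeries ℤ := by
  ext d
  obtain ⟨s, hs⟩ := (Filter.eventually_atTop.1 (coeff_prod_one_sub_X_pow_eventually_eq ℤ d))
  obtain ⟨N, hN⟩ := s.exists_nat_subset_range
  have h1 := hs (Finset.range (max N (d+1))) (hN.trans (Finset.range_subset_range.2 (le_max_left _ _)))
  rw [← h1, ← coeff_prod_stable 1 one_pos d (max N (d+1)) (le_max_right _ _)]
  simp only [one_mul]

open PowerSeries in
lemma expand_J (a b : ℕ) (ha : a ≠ 0) (hb : 0 < b) : expand a ha (J b) = J (a * b) := by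
  ext n
  by_cases h : a ∣ n
  · obtain ⟨m, rfl⟩ := h
    rw [coeff_expand_mul]
    have ha' : 1 ≤ a := Nat.one_le_iff_ne_zero.2 ha
    have hm : m ≤ a * m := by nlinarith
    rw [← coeff_prod_stable b hb m (a * m + 1) (by omega),
      ← coeff_prod_stable (a * b) (by positivity) (a * m) (a * m + 1) (by omega)]
    rw [← coeff_expand_mul a ha]
    simp only [map_prod, map_sub, map_one, map_pow, expand_X, ← pow_mul, mul_assoc]
  · rw [coeff_expand_of_not_dvd _ _ _ h]
    rw [← coeff_prod_stable (a * b) (by positivity) n (n + 1) (by omega)]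
    have : ∏ k ∈ Finset.range (n + 1), (1 - (X : ℤ⟦X⟧) ^ (a * b * (k + 1))) =
        expand a ha (∏ k ∈ Finset.range (n + 1), (1 - (X : ℤ⟦X⟧) ^ (b * (k + 1)))) := by
      simp only [map_prod, map_sub, map_one, map_pow, expand_X, ← pow_mul, mul_assoc]
    rw [this, coeff_expand_of_not_dvd _ _ _ h]

/-- Exponents of `f` all lie in the class `r` mod 7. -/
def IsCls (r : ZMod 7) (f : PowerSeries ℤ) : Prop :=
  ∀ n : ℕ, (n : ZMod 7) ≠ r → PowerSeries.coeff n f = 0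

/-- Part of `f` with exponents in class `r` mod 7. -/
def cls (r : ZMod 7) (f : PowerSeries ℤ) : PowerSeries ℤ :=
  PowerSeries.mk fun n => if (n : ZMod 7) = r then PowerSeries.coeff n f else 0

lemma coeff_cls (r : ZMod 7) (f : PowerSeries ℤ) (n : ℕ) : PowerSeries.coeff n (cls r f) =
    if (n : ZMod 7) = r then PowerSeries.coeff n f else 0 := by
  simp [cls]

lemma cls_isCls (r : ZMod 7) (f : PowerSeries ℤ) : IsCls r (cls r f) := by
  intro n hn
  rw [coeff_cls, if_neg hn]

lemma IsCls.mul {r s t : ZMod 7} {f g : PowerSeries ℤ} (hf : IsCls r f) (hg : IsCls s g)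
    (h : r + s = t) : IsCls t (f * g) := by
  intro n hn
  rw [PowerSeries.coeff_mul]
  apply Finset.sum_eq_zero
  rintro ⟨i, j⟩ hij
  rw [Finset.HasAntidiagonal.mem_antidiagonal] at hij
  dsimp only at hij ⊢
  by_cases hi : (i : ZMod 7) = r
  · by_cases hj : (j : ZMod 7) = s
    · exfalso
      apply hn
      rw [← hij, Nat.cast_add, hi, hj, h]
    · rw [hg j hj, mul_zero]
  · rw [hf i hi, zero_mul]

lemma IsCls.add {r : ZMod 7} {f g : PowerSeries ℤ} (hf : IsCls r f) (hg : IsCls r g) :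
    IsCls r (f + g) := by
  intro n hn
  rw [map_add, hf n hn, hg n hn, add_zero]

lemma IsCls.sub {r : ZMod 7} {f g : PowerSeries ℤ} (hf : IsCls r f) (hg : IsCls r g) :
    IsCls r (f - g) := by
  intro n hn
  rw [map_sub, hf n hn, hg n hn, sub_zero]

lemma IsCls.smul {r : ZMod 7} {f : PowerSeries ℤ} (hf : IsCls r f) (c : ℤ) :
    IsCls r (c • f) := by
  intro n hn
  rw [map_zsmul, hf n hn, smul_zero]

lemma cls_add (r : ZMod 7) (f g : PowerSeries ℤ) : cls r (f + g) = cls r f + cls r g := by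
  ext n
  rw [map_add, coeff_cls, coeff_cls, coeff_cls, map_add]
  split_ifs <;> simp

lemma IsCls.cls_self {r : ZMod 7} {f : PowerSeries ℤ} (hf : IsCls r f) : cls r f = f := by
  ext n
  rw [coeff_cls]
  split_ifs with h
  · rfl
  · exact (hf n h).symm

lemma IsCls.cls_ne {r s : ZMod 7} {f : PowerSeries ℤ} (hf : IsCls r f) (h : r ≠ s) : cls s f = 0 := by
  ext n
  rw [coeff_cls]
  split_ifs with h'
  · rw [hf n (by rw [h']; exact h.symm), map_zero]
  · simp

lemma pent_class (k : ℤ) : ((pentagonal k : ℕ) : ZMod 7) = 4 * (k : ZMod 7) * (3 * k - 1) := by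
  have h := congrArg (Int.cast (R := ZMod 7)) (two_mul_natCast_pentagonal k)
  push_cast at h
  rw [mul_assoc, ← h, ← mul_assoc]
  have : (4 * 2 : ZMod 7) = 1 := by decide
  rw [this, one_mul]

lemma pent_seven (m : ℤ) : pentagonal (7 * m - 1) = 49 * pentagonal m + 2 := by
  have h1 := two_mul_natCast_pentagonal (7 * m - 1)
  have h2 := two_mul_natCast_pentagonal m
  zify
  linarith

lemma pent_two (k : ℤ) (h : ((pentagonal k : ℕ) : ZMod 7) = 2) : ∃ m, k = 7 * m - 1 := by
  rw [pent_class] at h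
  have h2 : ∀ x : ZMod 7, 4 * x * (3 * x - 1) = 2 → x + 1 = 0 := by decide
  have h3 := h2 _ h
  have h4 : ((k + 1 : ℤ) : ZMod 7) = 0 := by push_cast; exact h3
  rw [ZMod.intCast_zmod_eq_zero_iff_dvd] at h4
  obtain ⟨m, hm⟩ := h4
  exact ⟨m, by push_cast at hm; linarith⟩

open PowerSeries in
lemma cls_two : cls 2 (J 1) = - (X ^ 2 * J 49) := by
  have h49 : J 49 = expand 49 (by norm_num) (J 1) := by rw [expand_J 49 1 (by norm_num) one_pos]
  ext n
  rw [coeff_cls, h49, J_one_eq, map_neg, coeff_X_pow_mul', coeff_expand]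
  by_cases h : ∃ m, n = 49 * pentagonal m + 2
  · obtain ⟨m, rfl⟩ := h
    have c1 : ((49 * pentagonal m + 2 : ℕ) : ZMod 7) = 2 := by
      push_cast
      have : (49 : ZMod 7) = 0 := by decide
      rw [this]; ring
    rw [if_pos c1, if_pos (by omega), Nat.add_sub_cancel, if_pos (Dvd.intro _ rfl),
      Nat.mul_div_cancel_left _ (by norm_num), ← pent_seven,
      coeff_pentagonalSeries_pentagonal, coeff_pentagonalSeries_pentagonal]
    rw [show 7 * m - 1 = 2 * (3 * m - 1) + m + 1 by ring, Int.negOnePow_succ, Int.negOnePow_add,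
      Int.negOnePow_two_mul, one_mul]
    simp
  · have r1 : (if 2 ≤ n then if 49 ∣ n - 2 then coeff ((n - 2) / 49) (pentagonalSeries ℤ) else 0 else 0) = 0 := by
      split_ifs with h2 h3
      · apply coeff_pentagonalSeries_eq_zero
        rintro ⟨m, hm⟩
        exact h ⟨m, by omega⟩
      · rfl
      · rfl
    rw [r1, neg_zero]
    split_ifs with h2
    · apply coeff_pentagonalSeries_eq_zero
      rintro ⟨k, rfl⟩
      obtain ⟨m, rfl⟩ := pent_two k h2
      exact h ⟨m, pent_seven m⟩
    · rfl

open PowerSeries in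
lemma J_decomp : J 1 = cls 0 (J 1) + cls 1 (J 1) + cls 5 (J 1) - X ^ 2 * J 49 := by
  rw [sub_eq_add_neg, ← cls_two]
  ext n
  simp only [map_add, coeff_cls]
  have h5 : ∀ x : ZMod 7, x = 0 ∨ x = 1 ∨ x = 5 ∨ x = 2 ∨ (x ≠ 0 ∧ x ≠ 1 ∧ x ≠ 5 ∧ x ≠ 2) := by decide
  rcases h5 (n : ZMod 7) with h | h | h | h | ⟨h1, h2, h3, h4⟩
  · rw [h, if_pos rfl, if_neg (by decide), if_neg (by decide), if_neg (by decide)]; ring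
  · rw [h, if_pos rfl, if_neg (by decide), if_neg (by decide), if_neg (by decide)]; ring
  · rw [h, if_pos rfl, if_neg (by decide), if_neg (by decide), if_neg (by decide)]; ring
  · rw [h, if_pos rfl, if_neg (by decide), if_neg (by decide), if_neg (by decide)]; ring
  · rw [if_neg h1, if_neg h2, if_neg h3, if_neg h4, J_one_eq]
    rw [coeff_pentagonalSeries_eq_zero]
    · rfl
    rintro ⟨k, rfl⟩
    rw [pent_class] at h1 h2 h3 h4
    revert h1 h2 h3 h4
    generalize (k : ZMod 7) = x
    revert x
    decide

lemma two_tri (j : ℕ) : 2 * (j * (j + 1) / 2) = j * (j + 1) :=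
  Nat.mul_div_cancel' (Nat.even_mul_succ_self j).two_dvd

lemma tri_class (j : ℕ) : ((j * (j + 1) / 2 : ℕ) : ZMod 7) = 4 * (j : ZMod 7) * (j + 1) := by
  have h := congrArg (Nat.cast (R := ZMod 7)) (two_tri j)
  rw [Nat.cast_mul] at h
  have h8 : (4 * 2 : ZMod 7) = 1 := by decide
  calc ((j * (j + 1) / 2 : ℕ) : ZMod 7) = 4 * 2 * ((j * (j + 1) / 2 : ℕ) : ZMod 7) := by
        rw [h8, one_mul]
    _ = _ := by
        rw [mul_assoc, mul_assoc]
        congr 1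
        rw [Nat.cast_ofNat] at h
        rw [h]
        push_cast
        ring

lemma cls_cube_zero (r : ZMod 7) (hr : ∀ x : ZMod 7, 4 * x * (x + 1) ≠ r) : cls r ((J 1) ^ 3) = 0 := by
  ext n
  rw [coeff_cls]
  split_ifs with h
  · rw [jac_zero, map_zero]
    rintro j rfl
    rw [tri_class] at h
    exact hr _ h
  · simp

lemma tri_seven (i : ℕ) : (7 * i + 3) * (7 * i + 3 + 1) / 2 = 49 * (i * (i + 1) / 2) + 6 := by
  have h1 := two_tri (7 * i + 3)
  have h2 := two_tri i
  zify at *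
  linarith

lemma tri_six (j : ℕ) (h : ((j * (j + 1) / 2 : ℕ) : ZMod 7) = 6) : ∃ i, j = 7 * i + 3 := by
  rw [tri_class] at h
  have h2 : ∀ x : ZMod 7, 4 * x * (x + 1) = 6 → x + 4 = 0 := by decide
  have h3 := h2 _ h
  have h4 : ((j + 4 : ℕ) : ZMod 7) = 0 := by push_cast; exact h3
  rw [ZMod.natCast_eq_zero_iff] at h4
  exact ⟨j / 7, by omega⟩

open PowerSeries in
lemma cls_cube_six : cls 6 ((J 1) ^ 3) = (-7 : ℤ) • (X ^ 6 * (J 49) ^ 3) := by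
  have h49 : (J 49) ^ 3 = expand 49 (by norm_num) ((J 1) ^ 3) := by
    rw [map_pow, expand_J 49 1 (by norm_num) one_pos]
  ext n
  rw [coeff_cls, h49, map_zsmul, coeff_X_pow_mul', coeff_expand]
  by_cases h : ∃ i : ℕ, n = 49 * (i * (i + 1) / 2) + 6
  · obtain ⟨i, rfl⟩ := h
    have c1 : ((49 * (i * (i + 1) / 2) + 6 : ℕ) : ZMod 7) = 6 := by
      rw [Nat.cast_add, Nat.cast_mul]
      have : ((49 : ℕ) : ZMod 7) = 0 := by decide
      rw [this]; simp
    rw [if_pos c1, if_pos (by omega), Nat.add_sub_cancel, if_pos (Dvd.intro _ rfl),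
      Nat.mul_div_cancel_left _ (by norm_num), ← tri_seven, jac_tri, jac_tri]
    rw [show 7 * i + 3 = 2 * (3 * i + 1) + i + 1 by ring, pow_succ, pow_add, pow_mul]
    simp
    ring
  · have r1 : (if 6 ≤ n then if 49 ∣ n - 6 then coeff ((n - 6) / 49) ((J 1) ^ 3) else 0 else 0) = 0 := by
      split_ifs with h2 h3
      · apply jac_zero
        intro m hm
        exact h ⟨m, by omega⟩
      · rfl
      · rfl
    rw [r1, smul_zero]
    split_ifs with h2
    · apply jac_zero
      rintro j rfl
      obtain ⟨m, rfl⟩ := tri_six j h2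
      exact h ⟨m, tri_seven m⟩
    · rfl

lemma cls_of_sum {f S0 S1 S2 S3 S4 S5 S6 : PowerSeries ℤ} (h : f = S0 + S1 + S2 + S3 + S4 + S5 + S6)
    (h0 : IsCls 0 S0) (h1 : IsCls 1 S1) (h2 : IsCls 2 S2) (h3 : IsCls 3 S3) (h4 : IsCls 4 S4)
    (h5 : IsCls 5 S5) (h6 : IsCls 6 S6) :
    cls 2 f = S2 ∧ cls 4 f = S4 ∧ cls 5 f = S5 ∧ cls 6 f = S6 := by
  subst h
  simp only [cls_add]
  refine ⟨?_, ?_, ?_, ?_⟩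
  · rw [h0.cls_ne (by decide), h1.cls_ne (by decide), h2.cls_self, h3.cls_ne (by decide),
      h4.cls_ne (by decide), h5.cls_ne (by decide), h6.cls_ne (by decide)]
    ring
  · rw [h0.cls_ne (by decide), h1.cls_ne (by decide), h2.cls_ne (by decide), h3.cls_ne (by decide),
      h4.cls_self, h5.cls_ne (by decide), h6.cls_ne (by decide)]
    ring
  · rw [h0.cls_ne (by decide), h1.cls_ne (by decide), h2.cls_ne (by decide), h3.cls_ne (by decide),
      h4.cls_ne (by decide), h5.cls_self, h6.cls_ne (by decide)]
    ring
  · rw [h0.cls_ne (by decide), h1.cls_ne (by decide), h2.cls_ne (by decide), h3.cls_ne (by decide),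
      h4.cls_ne (by decide), h5.cls_ne (by decide), h6.cls_self]
    ring

lemma cube_rel (A B C e : PowerSeries ℤ) (hA : IsCls 0 A) (hB : IsCls 1 B) (hC : IsCls 5 C)
    (he : IsCls 2 e) (hE : J 1 = A + B + C - e) (he6 : e = PowerSeries.X ^ 2 * J 49) :
    A*B*C + e^3 = 0 ∧ A*B^2 - A^2*e + C*e^2 = 0 ∧ B*C^2 - B^2*e + A*e^2 = 0 ∧
      C*A^2 - C^2*e + B*e^2 = 0 := by
  have key := cls_of_sum (f := (J 1) ^ 3)
    (S0 := A*A*A - (6:ℤ) • (A*C*e) + (3:ℤ) • (B*B*C))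
    (S1 := (3:ℤ) • (A*A*B) - (6:ℤ) • (B*C*e) + C*C*C)
    (S2 := (3:ℤ) • (A*B*B) - (3:ℤ) • (A*A*e) + (3:ℤ) • (C*e*e))
    (S3 := (3:ℤ) • (A*C*C) - (6:ℤ) • (A*B*e) + B*B*B)
    (S4 := (3:ℤ) • (B*C*C) - (3:ℤ) • (B*B*e) + (3:ℤ) • (A*e*e))
    (S5 := (3:ℤ) • (C*A*A) - (3:ℤ) • (C*C*e) + (3:ℤ) • (B*e*e))
    (S6 := (6:ℤ) • (A*B*C) - e*e*e)
    (by rw [hE]; simp only [zsmul_eq_mul]; push_cast; ring)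
    ((((hA.mul hA rfl).mul hA (by decide)).sub (((hA.mul hC rfl).mul he (by decide)).smul _)).add
      (((hB.mul hB rfl).mul hC (by decide)).smul _))
    (((((hA.mul hA rfl).mul hB (by decide)).smul _).sub
      (((hB.mul hC rfl).mul he (by decide)).smul _)).add ((hC.mul hC rfl).mul hC (by decide)))
    (((((hA.mul hB rfl).mul hB (by decide)).smul _).sub
      (((hA.mul hA rfl).mul he (by decide)).smul _)).add (((hC.mul he rfl).mul he (by decide)).smul _))
    (((((hA.mul hC rfl).mul hC (by decide)).smul _).sub
      (((hA.mul hB rfl).mul he (by decide)).smul _)).add ((hB.mul hB rfl).mul hB (by decide)))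
    (((((hB.mul hC rfl).mul hC (by decide)).smul _).sub
      (((hB.mul hB rfl).mul he (by decide)).smul _)).add (((hA.mul he rfl).mul he (by decide)).smul _))
    (((((hC.mul hA rfl).mul hA (by decide)).smul _).sub
      (((hC.mul hC rfl).mul he (by decide)).smul _)).add (((hB.mul he rfl).mul he (by decide)).smul _))
    ((((hA.mul hB rfl).mul hC (by decide)).smul _).sub ((he.mul he rfl).mul he (by decide)))
  obtain ⟨k2, k4, k5, k6⟩ := key
  rw [cls_cube_zero _ (by decide)] at k2 k4 k5
  rw [cls_cube_six] at k6
  have e3 : PowerSeries.X ^ 6 * (J 49) ^ 3 = e ^ 3 := by rw [he6]; ring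
  rw [e3] at k6
  simp only [zsmul_eq_mul] at k2 k4 k5 k6
  push_cast at k2 k4 k5 k6
  have n3 : (3 : PowerSeries ℤ) ≠ 0 := by
    intro h
    have h' := congrArg PowerSeries.constantCoeff h
    rw [map_ofNat (PowerSeries.constantCoeff (R := ℤ)) 3, map_zero] at h'
    norm_num at h'
  have n6 : (6 : PowerSeries ℤ) ≠ 0 := by
    intro h
    have h' := congrArg PowerSeries.constantCoeff h
    rw [map_ofNat (PowerSeries.constantCoeff (R := ℤ)) 6, map_zero] at h'
    norm_num at h'
  refine ⟨?_, ?_, ?_, ?_⟩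
  · apply mul_left_cancel₀ n6; linear_combination -k6
  · apply mul_left_cancel₀ n3; linear_combination -k2
  · apply mul_left_cancel₀ n3; linear_combination -k4
  · apply mul_left_cancel₀ n3; linear_combination -k5

lemma aux_n1 {R : Type*} [CommRing R] (A B C e w : R) (h : w^6+w^5+w^4+w^3+w^2+w+1 = 0) :
    (A+w*B+w^5*C-w^2*e)*(A+w^2*B+w^3*C-w^4*e)*(A+w^4*B+w^6*C-w*e) =
      (A^3 - A*B^2 + B^3 - A^2*C + 3*A*B*C - B*C^2 + C^3 + A*B*e + A*C*e + B*C*e - A*e^2 - B*e^2 - C*e^2 - e^3) +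
      (A^2*B - A*B^2 - A^2*C + A*B*C + B^2*C + A*C^2 - B*C^2 - A^2*e - B^2*e - C^2*e - A*e^2 - B*e^2 - C*e^2) * (w+w^2+w^4) := by
  linear_combination (-C^2*e*w^9 + C^3*w^8 + C^2*e*w^8 + B*C^2*w^7 - C^3*w^7 - B*C*e*w^7 +
      B*C*e*w^6 + C*e^2*w^6 + B^2*C*w^5 + A*C^2*w^5 - B*C^2*w^5 - B*C*e*w^5 - C^2*e*w^5 -
      C*e^2*w^5 - B^2*C*w^4 - A*C^2*w^4 + B*C^2*w^4 - A*C*e*w^4 + C^2*e*w^4 + B*e^2*w^4 +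
      C*e^2*w^4 + A*B*C*w^3 + B^2*C*w^3 + A*C^2*w^3 - B*C^2*w^3 - B^2*e*w^3 - C^2*e*w^3 -
      B*e^2*w^3 - C*e^2*w^3 - A*B*e*w^2 + B^3*w + 2*A*B*C*w - B^2*C*w - A*C^2*w + C^3*w +
      A*B*e*w + B^2*e*w + A*C*e*w + B*C*e*w + C^2*e*w - e^3*w + A*B^2 - B^3 + A^2*C - 3*A*B*C +
      B*C^2 - C^3 - A*B*e - A*C*e - B*C*e + A*e^2 + B*e^2 + C*e^2 + e^3) * h

lemma aux_n2 {R : Type*} [CommRing R] (A B C e w : R) (h : w^6+w^5+w^4+w^3+w^2+w+1 = 0) :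
    (A+w^3*B+w*C-w^6*e)*(A+w^6*B+w^2*C-w^5*e)*(A+w^5*B+w^4*C-w^3*e) =
      (A^3 - A*B^2 + B^3 - A^2*C + 3*A*B*C - B*C^2 + C^3 + A*B*e + A*C*e + B*C*e - A*e^2 - B*e^2 - C*e^2 - e^3) +
      (A^2*B - A*B^2 - A^2*C + A*B*C + B^2*C + A*C^2 - B*C^2 - A^2*e - B^2*e - C^2*e - A*e^2 - B*e^2 - C*e^2) * (w^3+w^5+w^6) := by
  linear_combination (-B^2*e*w^11 + B^2*e*w^10 - B*C*e*w^10 + B*e^2*w^10 + B*C*e*w^9 + C*e^2*w^9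
      + B^3*w^8 - B*e^2*w^8 - C*e^2*w^8 - e^3*w^8 - B^3*w^7 + B^2*C*w^7 - B^2*e*w^7 - B*C*e*w^7
      + e^3*w^7 - A*B*e*w^6 - C^2*e*w^6 + A*B^2*w^5 - B^2*C*w^5 + B*C^2*w^5 + B^2*e*w^5 +
      C^2*e*w^5 + A*e^2*w^5 + B*e^2*w^5 + C*e^2*w^5 - A*B^2*w^4 + A*B*C*w^4 + B^2*C*w^4 -
      B*C^2*w^4 - B^2*e*w^4 - A*C*e*w^4 - C^2*e*w^4 - A*e^2*w^4 - B*e^2*w^4 - C*e^2*w^4 +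
      A*B^2*w^3 - A*B*C*w^3 - B^2*C*w^3 + B*C^2*w^3 + B^2*e*w^3 + C^2*e*w^3 + A*e^2*w^3 +
      B*e^2*w^3 + C*e^2*w^3 - A*B^2*w + B^3*w + 3*A*B*C*w - B*C^2*w + C^3*w + A*B*e*w + A*C*e*w
      + B*C*e*w - A*e^2*w - B*e^2*w - C*e^2*w - e^3*w + A*B^2 - B^3 + A^2*C - 3*A*B*C + B*C^2 -
      C^3 - A*B*e - A*C*e - B*C*e + A*e^2 + B*e^2 + C*e^2 + e^3) * h

lemma aux_norm {R : Type*} [CommRing R] (A B C e w : R) (h : w^6+w^5+w^4+w^3+w^2+w+1 = 0)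
    (p q : R) (hp : p = A^3 - A*B^2 + B^3 - A^2*C + 3*A*B*C - B*C^2 + C^3 + A*B*e + A*C*e + B*C*e - A*e^2 - B*e^2 - C*e^2 - e^3)
    (hq : q = A^2*B - A*B^2 - A^2*C + A*B*C + B^2*C + A*C^2 - B*C^2 - A^2*e - B^2*e - C^2*e - A*e^2 - B*e^2 - C*e^2) :
    ∏ i ∈ Finset.range 7, (A + w^i*B + w^(5*i)*C - w^(2*i)*e) = (A+B+C-e)*(p^2-p*q+2*q^2) := by
  have h7 : w ^ 7 = 1 := by linear_combination (w - 1) * h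
  have red : ∀ k r, w ^ (7 * k + r) = w ^ r := by
    intro k r
    rw [pow_add, pow_mul, h7, one_pow, one_mul]
  have e1 := aux_n1 A B C e w h
  have e2 := aux_n2 A B C e w h
  rw [← hp, ← hq] at e1 e2
  have hs : (w+w^2+w^4)*(w^3+w^5+w^6) = 2 := by
    linear_combination (w^4 + 2*w - 2) * h
  have g0 : A + w^0*B + w^(5*0)*C - w^(2*0)*e = (A+B+C-e) := by
    simp
  have g1 : A + w^1*B + w^(5*1)*C - w^(2*1)*e = (A+w*B+w^5*C-w^2*e) := by
    simp
  have g2 : A + w^2*B + w^(5*2)*C - w^(2*2)*e = (A+w^2*B+w^3*C-w^4*e) := by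
    rw [show 5*2 = 7*1+3 by norm_num, show 2*2 = 7*0+4 by norm_num, red, red]
  have g3 : A + w^3*B + w^(5*3)*C - w^(2*3)*e = (A+w^3*B+w*C-w^6*e) := by
    rw [show 5*3 = 7*2+1 by norm_num, show 2*3 = 7*0+6 by norm_num, red, red]; simp
  have g4 : A + w^4*B + w^(5*4)*C - w^(2*4)*e = (A+w^4*B+w^6*C-w*e) := by
    rw [show 5*4 = 7*2+6 by norm_num, show 2*4 = 7*1+1 by norm_num, red, red]; simp
  have g5 : A + w^5*B + w^(5*5)*C - w^(2*5)*e = (A+w^5*B+w^4*C-w^3*e) := by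
    rw [show 5*5 = 7*3+4 by norm_num, show 2*5 = 7*1+3 by norm_num, red, red]
  have g6 : A + w^6*B + w^(5*6)*C - w^(2*6)*e = (A+w^6*B+w^2*C-w^5*e) := by
    rw [show 5*6 = 7*4+2 by norm_num, show 2*6 = 7*1+5 by norm_num, red, red]
  simp only [Finset.prod_range_succ, Finset.prod_range_zero]
  rw [g0, g1, g2, g3, g4, g5, g6]
  clear g0 g1 g2 g3 g4 g5 g6 hp hq red h7
  generalize (A+w*B+w^5*C-w^2*e) = x1 at e1 e2 ⊢
  generalize (A+w^2*B+w^3*C-w^4*e) = x2 at e1 e2 ⊢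
  generalize (A+w^3*B+w*C-w^6*e) = x3 at e1 e2 ⊢
  generalize (A+w^4*B+w^6*C-w*e) = x4 at e1 e2 ⊢
  generalize (A+w^5*B+w^4*C-w^3*e) = x5 at e1 e2 ⊢
  generalize (A+w^6*B+w^2*C-w^5*e) = x6 at e1 e2 ⊢
  generalize A + B + C - e = x0
  linear_combination x0*(x3*x6*x5*e1 + (p + q*(w+w^2+w^4))*e2 + q^2*hs + p*q*h)

open PowerSeries in
lemma quot_eq (n : ℕ) (f g : PowerSeries ℂ) (h : ∀ d < n, coeff d f = coeff d g) :
    Ideal.Quotient.mk (Ideal.span {(X : PowerSeries ℂ) ^ n}) f = Ideal.Quotient.mk _ g := by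
  rw [Ideal.Quotient.eq, Ideal.mem_span_singleton, X_pow_dvd_iff]
  intro d hd
  rw [map_sub, h d hd, sub_self]

/-- coefficient extension to the complex numbers -/
def phi : PowerSeries ℤ →+* PowerSeries ℂ := PowerSeries.map (Int.castRingHom ℂ)

lemma phi_inj : Function.Injective phi :=
  PowerSeries.map_injective _ Int.cast_injective

open PowerSeries in
lemma coeff_phi_J (b : ℕ) (hb : 0 < b) (d n : ℕ) (h : d < n) :
    coeff d (phi (J b)) = coeff d (∏ k ∈ Finset.range n, (1 - (X : PowerSeries ℂ) ^ (b * (k + 1)))) := by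
  have : (∏ k ∈ Finset.range n, (1 - (X : PowerSeries ℂ) ^ (b * (k + 1)))) =
      phi (∏ k ∈ Finset.range n, (1 - (X : PowerSeries ℤ) ^ (b * (k + 1)))) := by
    simp [phi, map_prod]
  rw [this, phi, coeff_map, coeff_map, coeff_prod_stable b hb d n h]

lemma fin_factor {R : Type*} [CommRing R] (w y : R) (h : w^6+w^5+w^4+w^3+w^2+w+1 = 0) :
    ∏ i ∈ Finset.range 7, (1 - w ^ i * y) = 1 - y ^ 7 := by
  have := aux_norm 1 (-y) 0 0 w h _ _ rfl rfl
  simp only [mul_zero, add_zero, sub_zero, mul_neg, ← sub_eq_add_neg] at this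
  rw [this]
  ring

lemma prod_seven {R : Type*} [CommRing R] (g : ℕ → R) (n : ℕ) :
    ∏ k ∈ Finset.range (7 * (n + 1)), g k = (∏ k ∈ Finset.range (7 * n), g k) * g (7 * n) *
      g (7 * n + 1) * g (7 * n + 2) * g (7 * n + 3) * g (7 * n + 4) * g (7 * n + 5) * g (7 * n + 6) := by
  rw [show 7 * (n + 1) = 7 * n + 1 + 1 + 1 + 1 + 1 + 1 + 1 by ring]
  simp only [Finset.prod_range_succ]

lemma fin_abs {R : Type*} [CommRing R] (G f h F : ℕ → R) (hk : ∀ k, ¬ 7 ∣ k + 1 → G k = f k)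
    (h7 : ∀ n, G (7 * n + 6) = h n ^ 7) (hF : ∀ n, F n = f (7 * n + 6)) (n : ℕ) :
    (∏ k ∈ Finset.range (7 * n), G k) * ∏ k ∈ Finset.range n, F k =
      (∏ k ∈ Finset.range (7 * n), f k) * (∏ k ∈ Finset.range n, h k) ^ 7 := by
  induction n with
  | zero => simp
  | succ n ih =>
    rw [prod_seven, prod_seven, Finset.prod_range_succ, Finset.prod_range_succ, h7, hF,
      hk (7 * n) (by omega), hk (7 * n + 1) (by omega), hk (7 * n + 2) (by omega),
      hk (7 * n + 3) (by omega), hk (7 * n + 4) (by omega), hk (7 * n + 5) (by omega), mul_pow]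
    linear_combination f (7*n) * f (7*n+1) * f (7*n+2) * f (7*n+3) * f (7*n+4) * f (7*n+5) *
      f (7*n+6) * h n ^ 7 * ih

lemma fin_norm {R : Type*} [CommRing R] (z x : R)
    (hz : ∀ m, ¬ 7 ∣ m → (z^m)^6+(z^m)^5+(z^m)^4+(z^m)^3+(z^m)^2+(z^m)+1 = 0) (h7 : z ^ 7 = 1) (n : ℕ) :
    (∏ i ∈ Finset.range 7, ∏ k ∈ Finset.range (7 * n), (1 - (z ^ i * x) ^ (1 * (k + 1)))) *
      ∏ k ∈ Finset.range n, (1 - x ^ (49 * (k + 1))) =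
    (∏ k ∈ Finset.range (7 * n), (1 - x ^ (7 * (k + 1)))) *
      (∏ k ∈ Finset.range n, (1 - x ^ (7 * (k + 1)))) ^ 7 := by
  rw [Finset.prod_comm]
  have key : ∀ k, ¬ 7 ∣ (k + 1) →
      ∏ i ∈ Finset.range 7, (1 - (z ^ i * x) ^ (1 * (k + 1))) = 1 - x ^ (7 * (k + 1)) := by
    intro k hk
    have := fin_factor (z ^ (k + 1)) (x ^ (k + 1)) (hz _ hk)
    rw [← pow_mul, mul_comm (k + 1) 7] at this
    rw [← this]
    apply Finset.prod_congr rfl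
    intro i _
    rw [one_mul, mul_pow, ← pow_mul, ← pow_mul, mul_comm i]
  have key7 : ∀ n, ∏ i ∈ Finset.range 7, (1 - (z ^ i * x) ^ (1 * (7 * n + 6 + 1))) =
      (1 - x ^ (7 * (n + 1))) ^ 7 := by
    intro n
    have : ∀ i, (z ^ i * x) ^ (1 * (7 * n + 6 + 1)) = x ^ (7 * (n + 1)) := by
      intro i
      rw [one_mul, show 7 * n + 6 + 1 = 7 * (n + 1) by ring, mul_pow, ← pow_mul,
        show i * (7 * (n + 1)) = 7 * (i * (n + 1)) by ring, pow_mul, h7, one_pow, one_mul]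
    simp only [this, Finset.prod_const, Finset.card_range]
  refine fin_abs (fun k => ∏ i ∈ Finset.range 7, (1 - (z ^ i * x) ^ (1 * (k + 1))))
    (fun k => 1 - x ^ (7 * (k + 1))) (fun k => 1 - x ^ (7 * (k + 1)))
    (fun k => 1 - x ^ (49 * (k + 1))) key key7 (fun n => ?_) n
  congr 2
  ring

open PowerSeries in
lemma root_rel (ζ : ℂ) (hζ : IsPrimitiveRoot ζ 7) (m : ℕ) (hm : ¬ 7 ∣ m) :
    (ζ^m)^6+(ζ^m)^5+(ζ^m)^4+(ζ^m)^3+(ζ^m)^2+(ζ^m)+1 = 0 := by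
  have h1 : ζ ^ m ≠ 1 := fun h => hm (hζ.dvd_of_pow_eq_one m h)
  have h7 : (ζ ^ m) ^ 7 = 1 := by rw [← pow_mul, mul_comm, pow_mul, hζ.pow_eq_one, one_pow]
  apply mul_left_cancel₀ (sub_ne_zero.2 h1)
  linear_combination h7

open PowerSeries in
lemma norm_J (ζ : ℂ) (hζ : IsPrimitiveRoot ζ 7) :
    (∏ i ∈ Finset.range 7, rescale (ζ ^ i) (phi (J 1))) * phi (J 49) = phi (J 7) ^ 8 := by
  ext d
  obtain ⟨n, hn⟩ : ∃ n, n = d + 1 := ⟨_, rfl⟩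
  have hQ : Ideal.Quotient.mk (Ideal.span {(X : PowerSeries ℂ) ^ n})
      ((∏ i ∈ Finset.range 7, rescale (ζ ^ i) (phi (J 1))) * phi (J 49)) =
      Ideal.Quotient.mk _ (phi (J 7) ^ 8) := by
    have q1 : ∀ i, Ideal.Quotient.mk (Ideal.span {(X : PowerSeries ℂ) ^ n})
        (rescale (ζ ^ i) (phi (J 1))) = Ideal.Quotient.mk _
        (∏ k ∈ Finset.range (7 * n), (1 - (C ζ ^ i * X : PowerSeries ℂ) ^ (1 * (k + 1)))) := by
      intro i
      have : (∏ k ∈ Finset.range (7 * n), (1 - (C ζ ^ i * X : PowerSeries ℂ) ^ (1 * (k + 1)))) =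
        rescale (ζ ^ i) (∏ k ∈ Finset.range (7 * n), (1 - (X : PowerSeries ℂ) ^ (1 * (k + 1)))) := by
        simp only [map_prod, map_sub, map_one, map_pow, rescale_X]
      rw [this]
      apply quot_eq
      intro d hd
      rw [coeff_rescale, coeff_rescale, coeff_phi_J 1 one_pos d (7 * n) (by omega)]
    rw [map_mul, map_prod, map_pow]
    simp only [q1]
    rw [quot_eq n _ _ (fun d hd => coeff_phi_J 49 (by norm_num) d n hd), ← map_prod, ← map_mul,
      fin_norm (C ζ) X ?_ ?_ n]
    · rw [map_mul, map_pow, ← quot_eq n _ _ (fun d hd => coeff_phi_J 7 (by norm_num) d n hd),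
        ← quot_eq n _ _ (fun d hd => coeff_phi_J 7 (by norm_num) d (7 * n) (by omega)), ← pow_succ']
    · intro m hm
      have := congrArg (C (R := ℂ)) (root_rel ζ hζ m hm)
      simpa only [map_add, map_pow, map_one, map_zero] using this
    · rw [← map_pow, hζ.pow_eq_one, map_one]
  rw [Ideal.Quotient.eq, Ideal.mem_span_singleton, X_pow_dvd_iff] at hQ
  have := hQ d (by omega)
  rw [map_sub] at this
  exact sub_eq_zero.1 this

open PowerSeries in
lemma rescale_cls (z : ℂ) (hz : z ^ 7 = 1) (r : ℕ) (f : PowerSeries ℤ) (hf : IsCls (r : ZMod 7) f) :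
    rescale z (phi f) = C z ^ r * phi f := by
  ext n
  rw [coeff_rescale, ← map_pow, coeff_C_mul, phi, coeff_map]
  by_cases h : (n : ZMod 7) = r
  · congr 1
    rw [ZMod.natCast_eq_natCast_iff] at h
    rw [← Nat.div_add_mod n 7, ← Nat.div_add_mod r 7, pow_add, pow_add, pow_mul, pow_mul, hz, h]
    simp
  · rw [hf n h]; simp

lemma norm_rel (A B C e : PowerSeries ℤ) (hA : IsCls 0 A) (hB : IsCls 1 B) (hC : IsCls 5 C)
    (he : IsCls 2 e) (hE : J 1 = A + B + C - e) (he6 : e = PowerSeries.X ^ 2 * J 49)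
    (h0 : A*B*C + e^3 = 0) (h1 : A*B^2 - A^2*e + C*e^2 = 0) (h2 : B*C^2 - B^2*e + A*e^2 = 0)
    (h3 : C*A^2 - C^2*e + B*e^2 = 0) :
    (A^3*B+B^3*C+C^3*A+8*e^4)^2 = (PowerSeries.X * (J 7) ^ 4) ^ 2 := by
  have hζ := Complex.isPrimitiveRoot_exp 7 (by norm_num)
  generalize Complex.exp (2 * Real.pi * Complex.I / (7 : ℕ)) = ζ at hζ
  have hN := norm_J ζ hζ
  have hw := congrArg (PowerSeries.C (R := ℂ)) (root_rel ζ hζ 1 (by norm_num))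
  simp only [map_add, map_pow, map_one, map_zero, pow_one] at hw
  have hr : ∀ i, PowerSeries.rescale (ζ ^ i) (phi (J 1)) = phi A + (PowerSeries.C ζ) ^ i * phi B +
      (PowerSeries.C ζ) ^ (5 * i) * phi C - (PowerSeries.C ζ) ^ (2 * i) * phi e := by
    intro i
    have hz : (ζ ^ i) ^ 7 = 1 := by rw [← pow_mul, mul_comm, pow_mul, hζ.pow_eq_one, one_pow]
    rw [hE, map_sub, map_add, map_add, map_sub, map_add, map_add,
      rescale_cls _ hz 0 A (by exact_mod_cast hA), rescale_cls _ hz 1 B (by exact_mod_cast hB),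
      rescale_cls _ hz 5 C (by exact_mod_cast hC), rescale_cls _ hz 2 e (by exact_mod_cast he)]
    simp only [map_pow, ← pow_mul]
    rw [mul_comm i 5, mul_comm i 2]
    simp
  simp only [hr] at hN
  rw [aux_norm _ _ _ _ _ hw _ _ rfl rfl] at hN
  rw [← aux_N A B C e h0 h1 h2 h3 _ _ rfl rfl]
  have hN' := phi_inj (a₁ := (A+B+C-e)*((A^3 - A*B^2 + B^3 - A^2*C + 3*A*B*C - B*C^2 + C^3 + A*B*e + A*C*e + B*C*e - A*e^2 - B*e^2 - C*e^2 - e^3)^2-(A^3 - A*B^2 + B^3 - A^2*C + 3*A*B*C - B*C^2 + C^3 + A*B*e + A*C*e + B*C*e - A*e^2 - B*e^2 - C*e^2 - e^3)*(A^2*B - A*B^2 - A^2*C + A*B*C + B^2*C + A*C^2 - B*C^2 - A^2*e - B^2*e - C^2*e - A*e^2 - B*e^2 - C*e^2)+2*(A^2*B - A*B^2 - A^2*C + A*B*C + B^2*C + A*C^2 - B*C^2 - A^2*e - B^2*e - C^2*e - A*e^2 - B*e^2 - C*e^2)^2) * J 49) (a₂ := (J 7) ^ 8) (by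
      rw [map_pow, ← hN]
      simp only [map_mul, map_add, map_sub, map_pow, map_ofNat])
  rw [show (PowerSeries.X * (J 7) ^ 4) ^ 2 = PowerSeries.X ^ 2 * (J 7) ^ 8 by ring, ← hN']
  conv_lhs => rw [mul_comm]; enter [1]; rw [he6]
  rw [mul_assoc]
  congr 1
  rw [mul_comm]

open PowerSeries in
lemma y4_eq (A B C e : PowerSeries ℤ) (hA : A = cls 0 (J 1)) (hB : B = cls 1 (J 1))
    (hC : C = cls 5 (J 1)) (he6 : e = X ^ 2 * J 49)
    (h : (A^3*B+B^3*C+C^3*A+8*e^4)^2 = (X * (J 7) ^ 4) ^ 2) :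
    A^3*B+B^3*C+C^3*A+8*e^4 = - (X * (J 7) ^ 4) := by
  rcases sq_eq_sq_iff_eq_or_eq_neg.1 h with h | h
  · exfalso
    have c : ∀ b, 0 < b → constantCoeff (J b) = 1 := by
      intro b hb
      rw [← coeff_zero_eq_constantCoeff_apply, ← coeff_prod_stable b hb 0 1 le_rfl]
      simp [hb.ne']
    have b1 : coeff 1 (J 1) = -1 := by
      rw [← coeff_prod_stable 1 one_pos 1 2 le_rfl]
      simp [Finset.prod_range_succ, sub_mul, mul_sub, coeff_X, coeff_one, coeff_X_pow]
    have cA : constantCoeff A = 1 := by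
      rw [← coeff_zero_eq_constantCoeff_apply, hA, coeff_cls, if_pos (by decide),
        coeff_zero_eq_constantCoeff_apply, c 1 one_pos]
    have cB : coeff 1 B = -1 := by
      rw [hB, coeff_cls, if_pos (by decide), b1]
    obtain ⟨B', hB'⟩ : X ∣ B := by
      rw [X_dvd_iff, ← coeff_zero_eq_constantCoeff_apply, hB, coeff_cls, if_neg (by decide)]
    obtain ⟨C', hC'⟩ : X ^ 2 ∣ C := by
      rw [X_pow_dvd_iff]
      intro m hm
      rw [hC, coeff_cls]
      interval_cases m
      · rw [if_neg (by decide)]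
      · rw [if_neg (by decide)]
    have cB' : constantCoeff B' = -1 := by
      rw [hB', ← zero_add 1, coeff_succ_X_mul, coeff_zero_eq_constantCoeff_apply] at cB
      exact cB
    rw [hB', hC', he6] at h
    have h' : A ^ 3 * B' + X * (X ^ 3 * B' ^ 3 * C' + X ^ 4 * C' ^ 3 * A + X ^ 6 * (8 * J 49 ^ 4)) =
        J 7 ^ 4 := by
      apply mul_left_cancel₀ (X_ne_zero (R := ℤ))
      linear_combination h
    have h'' := congrArg constantCoeff h'
    simp only [map_add, map_mul, map_pow, constantCoeff_X, zero_mul, add_zero, cA, cB',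
      c 7 (by norm_num)] at h''
    norm_num at h''
  · exact h

lemma V7_of (f : PowerSeries ℤ) : V7 (HahnSeries.ofPowerSeries ℤ ℤ f) =
    HahnSeries.ofPowerSeries ℤ ℤ (PowerSeries.expand 7 (by norm_num) f) := by
  ext n
  by_cases h : (7 : ℤ) ∣ n
  · obtain ⟨m, rfl⟩ := h
    rw [V7_coeff]
    rcases le_or_gt 0 m with hm | hm
    · lift m to ℕ using hm
      rw [show (7 : ℤ) * (m : ℤ) = ((7 * m : ℕ) : ℤ) by push_cast; ring]
      rw [HahnSeries.ofPowerSeries_apply_coeff, HahnSeries.ofPowerSeries_apply_coeff,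
        PowerSeries.coeff_expand_mul]
    · rw [HahnSeries.ofPowerSeries_apply, HahnSeries.ofPowerSeries_apply,
        HahnSeries.embDomain_of_notMem_range, HahnSeries.embDomain_of_notMem_range]
      · rintro ⟨k, hk⟩
        simp at hk
        omega
      · rintro ⟨k, hk⟩
        simp at hk
        omega
  · rw [V7_coeff_zero _ _ h]
    rcases le_or_gt 0 n with hm | hm
    · lift n to ℕ using hm
      rw [HahnSeries.ofPowerSeries_apply_coeff, PowerSeries.coeff_expand_of_not_dvd]
      exact_mod_cast h
    · rw [HahnSeries.ofPowerSeries_apply, HahnSeries.embDomain_of_notMem_range]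
      rintro ⟨k, hk⟩
      simp at hk
      omega

lemma assemble {R : Type*} [CommRing R] [IsDomain R] (A B C e ε T s Q P K : R) (hε : e * ε = 1)
    (h0 : A*B*C + e^3 = 0) (h1 : A*B^2 - A^2*e + C*e^2 = 0) (h2 : B*C^2 - B^2*e + A*e^2 = 0)
    (h3 : C*A^2 - C^2*e + B*e^2 = 0) (hy : A^3*B+B^3*C+C^3*A+8*e^4 = -(Q * P^4))
    (hT : T * (A + B + C - e)^4 = Q * P^4) (hs : s * P^4 = Q^7 * K^4) (he : e = Q^2 * K) :
    T ^ 7 = s + (modL.map fun x => (x.2.2 : R) * (T ^ x.1 * s ^ x.2.1)).sum := by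
  apply modL_sum
  have e3 : e ^ 3 * ε ^ 3 = 1 := by rw [← mul_pow, hε, one_pow]
  have e4 : e ^ 4 * ε ^ 4 = 1 := by rw [← mul_pow, hε, one_pow]
  have e2 : e ^ 2 * ε ^ 2 = 1 := by rw [← mul_pow, hε, one_pow]
  apply aux_F ((A + B + C - e) * ε) T s
  · have e4' : (Q ^ 2 * K) ^ 4 * ε ^ 4 = 1 := by rw [← he]; exact e4
    linear_combination s * ε ^ 4 * hT + Q * ε ^ 4 * hs + e4'
  · apply aux_G (A * ε) (B * ε) (C * ε)
    · linear_combination ε ^ 3 * h0 - e3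
    · linear_combination ε ^ 3 * h1 + A ^ 2 * ε ^ 2 * hε - C * ε * e2
    · linear_combination ε ^ 3 * h2 + B ^ 2 * ε ^ 2 * hε - A * ε * e2
    · linear_combination ε ^ 3 * h3 + C ^ 2 * ε ^ 2 * hε - B * ε * e2
    · linear_combination - hε
    · linear_combination - ε ^ 4 * hT - ε ^ 4 * hy + 8 * e4

lemma final_modular (T : (LaurentSeries ℤ)ˣ)
    (hT : (T : LaurentSeries ℤ) * HahnSeries.ofPowerSeries ℤ ℤ ((J 1) ^ 4)
        = HahnSeries.ofPowerSeries ℤ ℤ (PowerSeries.X * (J 7) ^ 4)) :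
    (T : LaurentSeries ℤ) ^ 7 = V7 T +
      (modL.map fun x => (x.2.2 : LaurentSeries ℤ) * ((T:LaurentSeries ℤ) ^ x.1 * (V7 T) ^ x.2.1)).sum := by
  obtain ⟨A, hA⟩ : ∃ A, A = cls 0 (J 1) := ⟨_, rfl⟩
  obtain ⟨B, hB⟩ : ∃ B, B = cls 1 (J 1) := ⟨_, rfl⟩
  obtain ⟨C, hC⟩ : ∃ C, C = cls 5 (J 1) := ⟨_, rfl⟩
  obtain ⟨e, he⟩ : ∃ e, e = PowerSeries.X ^ 2 * J 49 := ⟨_, rfl⟩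
  have hE : J 1 = A + B + C - e := by
    rw [hA, hB, hC, he]; exact J_decomp
  have iA : IsCls 0 A := hA ▸ cls_isCls _ _
  have iB : IsCls 1 B := hB ▸ cls_isCls _ _
  have iC : IsCls 5 C := hC ▸ cls_isCls _ _
  have ie : IsCls 2 e := by
    have : e = (-1 : ℤ) • cls 2 (J 1) := by rw [cls_two, he]; simp
    rw [this]
    exact (cls_isCls _ _).smul _
  obtain ⟨h0, h1, h2, h3⟩ := cube_rel A B C e iA iB iC ie hE he
  have hy := y4_eq A B C e hA hB hC he (norm_rel A B C e iA iB iC ie hE he h0 h1 h2 h3)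
  -- move to Laurent series
  have hs := congrArg V7 hT
  rw [map_mul, V7_of, V7_of, map_mul (PowerSeries.expand 7 _),
    map_pow (PowerSeries.expand 7 _), map_pow (PowerSeries.expand 7 _), PowerSeries.expand_X,
    expand_J 7 1 (by norm_num) one_pos, expand_J 7 7 (by norm_num) (by norm_num)] at hs
  norm_num only at hs
  generalize V7 (T : LaurentSeries ℤ) = s at hs ⊢
  obtain ⟨ε, hε⟩ : ∃ ε, HahnSeries.ofPowerSeries ℤ ℤ e * ε = 1 := by
    have hu : IsUnit (J 49) := by
      rw [PowerSeries.isUnit_iff_constantCoeff, ← PowerSeries.coeff_zero_eq_constantCoeff_apply,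
        ← coeff_prod_stable 49 (by norm_num) 0 1 le_rfl]
      simp
    have hu2 : IsUnit (HahnSeries.ofPowerSeries ℤ ℤ e) := by
      rw [he, map_mul, qU_pow]
      exact ((Units.isUnit qU).pow 2).mul (hu.map _)
    exact hu2.exists_right_inv
  have mp := fun {x y : PowerSeries ℤ} (h : x = y) => congrArg (HahnSeries.ofPowerSeries ℤ ℤ) h
  rw [hE] at hT
  have m0 := mp h0
  have m1 := mp h1
  have m2 := mp h2
  have m3 := mp h3
  have my := mp hy
  have me := mp he
  simp only [map_add, map_sub, map_mul, map_pow, map_neg, map_zero, map_ofNat] at m0 m1 m2 m3 my me hT hs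
  exact assemble _ _ _ _ ε _ s _ _ _ hε m0 m1 m2 m3 my hT hs me

/-- Lemma on 7-adic weights: if for `l ≤ k ≤ l+6` there are Laurent
polynomials `p_k^{(i)} ∈ ℤ[x,x⁻¹]` of the form `∑_n c_i(k,n)·7^{⌊(7n−k+γ_i)/4⌋}·x^n` with
`U_7(u·t^k) = v₁·p_k^{(1)}(t) + v₂·p_k^{(2)}(t) + v₃·p_k^{(3)}(t)`, then such Laurent
polynomials of the same form exist for every `k : ℤ`. Here `t = q·J_7^4/J_1^4` and `U_7`
is the operator `∑ f(n) qⁿ ↦ ∑ f(7n) qⁿ`. -/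
theorem stmt7
    (T : (LaurentSeries ℤ)ˣ)
    (hT : (T : LaurentSeries ℤ) * HahnSeries.ofPowerSeries ℤ ℤ ((J 1) ^ 4)
        = HahnSeries.ofPowerSeries ℤ ℤ (PowerSeries.X * (J 7) ^ 4))
    (U : LaurentSeries ℤ → LaurentSeries ℤ)
    (hU : ∀ (f : LaurentSeries ℤ) (n : ℤ), (U f).coeff n = f.coeff (7 * n))
    (u v₁ v₂ v₃ : LaurentSeries ℤ) (l γ₁ γ₂ γ₃ : ℤ)
    (h : ∀ k : ℤ, l ≤ k → k ≤ l + 6 →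
      ∃ p₁ p₂ p₃ : ℤ →₀ ℤ,
        U (u * ↑(T ^ k)) = v₁ * evalT T p₁ + v₂ * evalT T p₂ + v₃ * evalT T p₃ ∧
        HasForm p₁ k γ₁ ∧ HasForm p₂ k γ₂ ∧ HasForm p₃ k γ₃) :
    ∀ k : ℤ,
      ∃ p₁ p₂ p₃ : ℤ →₀ ℤ,
        U (u * ↑(T ^ k)) = v₁ * evalT T p₁ + v₂ * evalT T p₂ + v₃ * evalT T p₃ ∧
        HasForm p₁ k γ₁ ∧ HasForm p₂ k γ₂ ∧ HasForm p₃ k γ₃ := by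
  exact main_of_modular T (final_modular T hT) U hU u v₁ v₂ v₃ l γ₁ γ₂ γ₃ h
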